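/- arXiv:1703.07147 — 2 statements merged into one kernel-verified Lean document; each statement's English description precedes it below -/
import Mathlib

section
/- Let T be a ℂ-linear triangulated category of finite type with split-generator G, and F a triangulated endofunctor of T with FⁿG ≇ 0 for all n ≥ 0. Then for every integer m ≥ 1 and every t ∈ ℝ, h_t(F^m) = m · h_t(F). -/
/-!
The entropy is the exponential growth rate of `a n = δ_t(G, Fⁿ G)`. If `a (n + 1)` is at most a
constant times `a n`, say `log a (n + 1) ≤ log a n + k`, then `k n - log a n` is monotone, and the
growth rate of a monotone sequence along the multiples of `m` is `m` times its growth rate. The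
constant comes from the usual argument: apply `F` to a tower building `Fⁿ G` from shifts of `G`,
then replace each shift of `F G` in it by a tower building `F G` from shifts of `G`.

Replacing the blocks of a tower by towers requires that extensions be associative, which is normally
a consequence of the octahedral axiom, whereas the category is only assumed to be pretriangulated.
Since only the isomorphism classes of the objects in a tower matter, it suffices to have the
octahedral axiom on objects: for `f : X ⟶ Q` with fibre `A` and `g : Q ⟶ D` with fibre `B`, the
fibre of `f ≫ g` is an extension of `B` by `A`. This follows from finiteness of type:

* by the long exact sequences, the fibre of `f ≫ g` and the extension of `B` by `A` classified by
  `B ⟶ Q ⟶ A⟦1⟧` receive morphism spaces of the same dimension from every object;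
* two objects `M`, `N` with `dim Hom(W, M) = dim Hom(W, N)` for all `W` are isomorphic. Looking at
  cones and descending along shifts, where the morphism spaces eventually vanish, every `φ` has the
  same precomposition rank on `Hom(-, M)` and `Hom(-, N)`. This makes the identity of `M` a sum of
  endomorphisms factoring through `N`. As the radical of `End M` does not contain the identity, one
  of these can be completed to a non-nilpotent endomorphism through `N`, hence to a nonzero
  idempotent, which splits off a common summand of `M` and `N` in the Karoubi envelope. Induction on
  `dim End M` then yields an isomorphism there, and so in the category itself.
-/

open CategoryTheory Limits Pretriangulated Filter
open scoped ENNReal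

universe u v u₂ v₂

namespace CatEntropy

section Defs

variable (C : Type u) [Category.{v} C] [Preadditive C] [HasZeroObject C]
  [HasShift C ℤ] [∀ n : ℤ, (shiftFunctor C n).Additive] [Pretriangulated C]

/-- `C` is of finite type: for all objects `M, N`, the total dimension
`Σ_{n ∈ ℤ} dim_ℂ Hom(M, N⟦n⟧)` is finite. -/
def IsFiniteType [Linear ℂ C] : Prop :=
  ∀ M N : C, {n : ℤ | ¬ Subsingleton (M ⟶ N⟦n⟧)}.Finite ∧
    ∀ n : ℤ, FiniteDimensional ℂ (M ⟶ N⟦n⟧)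

/-- A set of objects is a thick triangulated subcategory: closed under isomorphisms,
shifts, cones and direct summands. -/
structure IsThick (S : Set C) : Prop where
  mem_of_iso : ∀ {X Y : C}, (X ≅ Y) → X ∈ S → Y ∈ S
  shift_mem : ∀ (X : C) (n : ℤ), X ∈ S → X⟦n⟧ ∈ S
  cone_mem : ∀ (T : Triangle C), T ∈ (distTriang C) → T.obj₁ ∈ S → T.obj₂ ∈ S → T.obj₃ ∈ S
  summand_mem : ∀ (X Y : C), (X ⊞ Y) ∈ S → X ∈ S

/-- `⟨M⟩`, the smallest thick triangulated subcategory containing `M`. -/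
def thickClosure (M : C) : Set C :=
  ⋂₀ {S : Set C | IsThick C S ∧ M ∈ S}

/-- `G` is a split-generator of `C` if `⟨G⟩ = C`. -/
def IsSplitGenerator (G : C) : Prop := ∀ X : C, X ∈ thickClosure C G

open Classical in
/-- The complexity `δ_{C,t}(M, N)` of `N` with respect to `M`. -/
noncomputable def complexity (t : ℝ) (M N : C) : ℝ≥0∞ :=
  if IsZero N then 0
  else if N ∈ thickClosure C M then
    sInf {c : ℝ≥0∞ |
      ∃ (p : ℕ) (_ : 0 < p) (n : Fin p → ℤ) (A : Fin (p + 1) → C) (N' : C),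
        IsZero (A 0) ∧ Nonempty (A (Fin.last p) ≅ N ⊞ N') ∧
        (∀ i : Fin p,
          ∃ (f : A i.castSucc ⟶ A i.succ) (g : A i.succ ⟶ M⟦n i⟧)
            (h : M⟦n i⟧ ⟶ (A i.castSucc)⟦(1 : ℤ)⟧),
              Triangle.mk f g h ∈ (distTriang C)) ∧
        c = ∑ i : Fin p, ENNReal.ofReal (Real.exp ((n i : ℝ) * t))}
  else ⊤

/-- Iterated composition `Fⁿ` of an endofunctor. -/
def iter (F : C ⥤ C) : ℕ → C ⥤ C
  | 0 => 𝟭 C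
  | n + 1 => iter F n ⋙ F

/-- The entropy `h_t(F)` of an endofunctor `F`, computed with the split-generator `G`
(the defining limit exists and agrees with the `limsup` used here). -/
noncomputable def entropy (F : C ⥤ C) (G : C) (t : ℝ) : EReal :=
  Filter.atTop.limsup fun m : ℕ =>
    (((m : ℝ)⁻¹ : ℝ) : EReal) * (complexity C t G ((iter C F m).obj G)).log

end Defs

section NonNilpotent

lemma exists_isIdempotentElem_mul_of_commRing {R : Type*} [CommRing R] [IsArtinianRing R] {r : R}
    (hr : ¬ IsNilpotent r) : ∃ s : R, IsIdempotentElem (r * s) ∧ r * s ≠ 0 := by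
  obtain ⟨n, y, hy⟩ := IsArtinian.exists_pow_succ_smul_dvd r (1 : R)
  have hfix (j : ℕ) : r ^ n * (r * y) ^ j = r ^ n := by
    induction j with
    | zero => simp
    | succ j ih =>
      rw [pow_succ, ← mul_assoc, ih, ← mul_assoc, ← pow_succ]
      simpa only [smul_eq_mul, mul_one] using hy
  have he : r * (r ^ n * y ^ (n + 1)) = (r * y) ^ (n + 1) := by ring
  refine ⟨r ^ n * y ^ (n + 1), ?_, fun h0 => hr ⟨n, ?_⟩⟩
  · calc r * (r ^ n * y ^ (n + 1)) * (r * (r ^ n * y ^ (n + 1)))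
        = r ^ n * (r * y) ^ (n + 1) * (r * y ^ (n + 1)) := by rw [he]; ring
      _ = r * (r ^ n * y ^ (n + 1)) := by rw [hfix]; ring
  · rw [← hfix (n + 1), ← he, h0, mul_zero]

lemma exists_isIdempotentElem_mul (k : Type*) {A : Type*} [Field k] [Ring A] [Algebra k A]
    [FiniteDimensional k A] {a : A} (ha : ¬ IsNilpotent a) :
    ∃ c : A, IsIdempotentElem (a * c) ∧ a * c ≠ 0 := by
  let R := Algebra.adjoin k {a}
  have : IsMulCommutative R := Algebra.isMulCommutative_adjoin k (by simp)
  have : IsArtinianRing R := isArtinian_of_tower k inferInstance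
  let r : R := ⟨a, Algebra.self_mem_adjoin_singleton k a⟩
  have hr : ¬ IsNilpotent r := fun ⟨n, hn⟩ => ha ⟨n, congrArg Subtype.val hn⟩
  obtain ⟨s, hs, hs0⟩ := exists_isIdempotentElem_mul_of_commRing hr
  exact ⟨s, congrArg Subtype.val hs, fun h0 => hs0 (Subtype.ext h0)⟩

lemma mem_jacobson_bot_of_isNilpotent_mul {R : Type*} [Ring R] {x : R}
    (hx : ∀ y : R, IsNilpotent (y * x)) : x ∈ (⊥ : Ideal R).jacobson := by
  refine Ideal.mem_jacobson_iff.2 fun y => ?_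
  obtain ⟨u, hu⟩ := (hx y).isUnit_one_add
  refine ⟨↑u⁻¹, ?_⟩
  have : (↑u⁻¹ : R) * (1 + y * x) = 1 := by rw [← hu, Units.inv_mul]
  rw [Ideal.mem_bot, mul_assoc, add_comm, sub_eq_zero, ← this, mul_add, mul_one]

/-- A nontrivial ring differs from its Jacobson radical. -/
lemma exists_not_isNilpotent_mul_of_sum_eq_one {R ι : Type*} [Ring R] [Nontrivial R] {s : Finset ι}
    {x : ι → R} (hx : ∑ i ∈ s, x i = 1) : ∃ i ∈ s, ∃ y : R, ¬ IsNilpotent (y * x i) := by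
  by_contra! hall
  have hone : (1 : R) ∈ (⊥ : Ideal R).jacobson :=
    hx ▸ Ideal.sum_mem _ fun i hi => mem_jacobson_bot_of_isNilpotent_mul (hall i hi)
  exact bot_ne_top (Ideal.jacobson_eq_top_iff.1 ((Ideal.eq_top_iff_one _).2 hone))

end NonNilpotent

section PreRank

lemma finrank_submodule_prod {k V W : Type*} [DivisionRing k] [AddCommGroup V] [Module k V]
    [AddCommGroup W] [Module k W] (p : Submodule k V) (q : Submodule k W)
    [FiniteDimensional k p] [FiniteDimensional k q] :
    Module.finrank k (p.prod q) = Module.finrank k p + Module.finrank k q := by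
  have hinj : Function.Injective (p.subtype.prodMap q.subtype) :=
    p.subtype_injective.prodMap q.subtype_injective
  rw [← Module.finrank_prod, ← LinearMap.finrank_range_of_inj hinj, LinearMap.range_prodMap,
    p.range_subtype, q.range_subtype]

variable (k : Type*) [Field k] {C : Type*} [Category* C] [Preadditive C] [Linear k C]

/-- The rank of precomposition with `φ`, as a linear map `(B ⟶ M) → (A ⟶ M)`. Up to isomorphism,
`M` is determined by these ranks (`nonempty_iso_of_preRank_eq`). -/
noncomputable def preRank {A B : C} (φ : A ⟶ B) (M : C) : ℕ :=
  Module.finrank k (LinearMap.range (Linear.leftComp k M φ))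

lemma preRank_id (A M : C) : preRank k (𝟙 A) M = Module.finrank k (A ⟶ M) := by
  have : Linear.leftComp k M (𝟙 A) = LinearMap.id := by ext; simp
  rw [preRank, this, LinearMap.range_id, finrank_top]

lemma preRank_eq_of_iso {A B M N : C} (φ : A ⟶ B) (e : M ≅ N) :
    preRank k φ M = preRank k φ N := by
  have hcomp : Linear.leftComp k N φ ∘ₗ (Linear.homCongr k (Iso.refl B) e).toLinearMap =
      (Linear.homCongr k (Iso.refl A) e).toLinearMap ∘ₗ Linear.leftComp k M φ := by
    ext; simp [Linear.homCongr_apply]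
  rw [preRank, preRank, ← LinearEquiv.range_comp (Linear.homCongr k (Iso.refl B) e), hcomp,
    LinearMap.range_comp]
  exact ((Linear.homCongr k (Iso.refl A) e).finrank_map_eq _).symm

lemma preRank_biprod [HasBinaryBiproducts C] [∀ X Y : C, FiniteDimensional k (X ⟶ Y)]
    {A B : C} (φ : A ⟶ B) (M N : C) :
    preRank k φ (M ⊞ N) = preRank k φ M + preRank k φ N := by
  let split (W : C) : (W ⟶ M ⊞ N) →ₗ[k] (W ⟶ M) × (W ⟶ N) :=
    (Linear.rightComp k W biprod.fst).prod (Linear.rightComp k W biprod.snd)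
  have hinj : Function.Injective (split A) := fun f g hfg =>
    biprod.hom_ext _ _ (congrArg Prod.fst hfg) (congrArg Prod.snd hfg)
  have hsurj : LinearMap.range (split B) = ⊤ :=
    LinearMap.range_eq_top.2 fun p => ⟨biprod.lift p.1 p.2, by simp [split]⟩
  have hcomp : split A ∘ₗ Linear.leftComp k (M ⊞ N) φ =
      (Linear.leftComp k M φ).prodMap (Linear.leftComp k N φ) ∘ₗ split B := by
    ext <;> simp [split]
  calc preRank k φ (M ⊞ N)
      = Module.finrank k (LinearMap.range (split A ∘ₗ Linear.leftComp k (M ⊞ N) φ)) := by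
        rw [LinearMap.range_comp, preRank]
        exact (Submodule.equivMapOfInjective _ hinj _).finrank_eq
    _ = preRank k φ M + preRank k φ N := by
        rw [hcomp, LinearMap.range_comp, hsurj, Submodule.map_top, LinearMap.range_prodMap,
          finrank_submodule_prod, preRank, preRank]

end PreRank

section CommonSummands

variable {k C : Type*} [Field k] [Category* C] [Preadditive C] [Linear k C]

lemma exists_iso_biprod_of_retract {C : Type*} [Category* C] [Preadditive C]
    [HasBinaryBiproducts C] [IsIdempotentComplete C] {X M : C} (h : Retract X M) :
    ∃ M' : C, Nonempty (M ≅ X ⊞ M') := by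
  obtain ⟨M', j, q, hjq, hqj⟩ :=
    IsIdempotentComplete.idempotents_split M (𝟙 M - h.r ≫ h.i) (by simp)
  have hiq : h.i ≫ q = 0 := by
    calc h.i ≫ q = h.i ≫ (q ≫ j) ≫ q := by simp [hjq]
      _ = 0 := by simp [hqj]
  have hjr : j ≫ h.r = 0 := by
    calc j ≫ h.r = j ≫ (q ≫ j) ≫ h.r := by simp [reassoc_of% hjq]
      _ = 0 := by simp [hqj]
  refine ⟨M', ⟨⟨biprod.lift h.r q, biprod.desc h.i j, by simp [hqj], ?_⟩⟩⟩
  ext <;> simp [hiq, hjr, hjq]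

variable (k) in
lemma exists_retract_of_not_isNilpotent_comp [IsIdempotentComplete C] {M N : C}
    [FiniteDimensional k (M ⟶ M)] (β : M ⟶ N) (γ : N ⟶ M) (h : ¬ IsNilpotent (End.of (β ≫ γ))) :
    ∃ X : C, ¬ IsZero X ∧ Nonempty (Retract X M) ∧ Nonempty (Retract X N) := by
  have : FiniteDimensional k (End M) := ‹FiniteDimensional k (M ⟶ M)›
  obtain ⟨c, hc, hc0⟩ := exists_isIdempotentElem_mul k h
  obtain ⟨X, i, r, hir, hri⟩ := IsIdempotentComplete.idempotents_split M _ hc.eq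
  refine ⟨X, fun hX => hc0 ?_, ⟨⟨i, r, hir⟩⟩, ⟨⟨i ≫ c ≫ β, γ ≫ r, ?_⟩⟩⟩
  · rw [← hri, hX.eq_of_tgt r 0, zero_comp]
  · calc (i ≫ c ≫ β) ≫ γ ≫ r = i ≫ (c ≫ β ≫ γ) ≫ r := by simp
      _ = i ≫ (r ≫ i) ≫ r := by rw [hri]; rfl
      _ = 𝟙 X := by simp [hir]

variable [∀ X Y : C, FiniteDimensional k (X ⟶ Y)]

/-- Take the universal `φ`, whose components form a basis of `Hom(M, N)`: every `M ⟶ N` factors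
through `φ`, so equality of ranks forces `𝟙 M` to factor through `φ` as well. -/
lemma exists_comp_eq_id [HasFiniteBiproducts C] {M N : C}
    (h : ∀ {A B : C} (φ : A ⟶ B), preRank k φ M = preRank k φ N) :
    ∃ (n : ℕ) (φ : M ⟶ ⨁ fun _ : Fin n => N) (ψ : (⨁ fun _ : Fin n => N) ⟶ M), φ ≫ ψ = 𝟙 M := by
  let b := Module.finBasis k (M ⟶ N)
  let φ : M ⟶ ⨁ fun _ : Fin (Module.finrank k (M ⟶ N)) => N := biproduct.lift b
  have hsurjN : Function.Surjective (Linear.leftComp k N φ) := fun x =>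
    ⟨biproduct.desc fun i => b.repr x i • 𝟙 N, by simp [φ, biproduct.lift_desc, b.sum_repr]⟩
  have hrank : preRank k φ M = Module.finrank k (M ⟶ M) := by
    rw [h φ, preRank, LinearMap.range_eq_top.2 hsurjN, finrank_top, ← preRank_id, ← h, preRank_id]
  have hsurjM : Function.Surjective (Linear.leftComp k M φ) :=
    LinearMap.range_eq_top.1 (Submodule.eq_top_of_finrank_eq hrank)
  obtain ⟨ψ, hψ⟩ := hsurjM (𝟙 M)
  exact ⟨_, φ, ψ, hψ⟩

lemma exists_not_isNilpotent_comp [HasFiniteBiproducts C] {M N : C} (hM : ¬ IsZero M)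
    (h : ∀ {A B : C} (φ : A ⟶ B), preRank k φ M = preRank k φ N) :
    ∃ (β : M ⟶ N) (γ : N ⟶ M), ¬ IsNilpotent (End.of (β ≫ γ)) := by
  obtain ⟨n, φ, ψ, hφψ⟩ := exists_comp_eq_id h
  have : Nontrivial (End M) := ⟨𝟙 M, 0, fun h0 => hM ((IsZero.iff_id_eq_zero M).2 h0)⟩
  let β (i : Fin n) : M ⟶ N := φ ≫ biproduct.π _ i
  let γ (i : Fin n) : N ⟶ M := biproduct.ι (fun _ => N) i ≫ ψ
  have hsum : ∑ i, End.of (β i ≫ γ i) = 1 := by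
    calc ∑ i, β i ≫ γ i = φ ≫ (∑ i, biproduct.π _ i ≫ biproduct.ι (fun _ => N) i) ≫ ψ := by
          simp only [β, γ, Category.assoc, Preadditive.comp_sum, Preadditive.sum_comp]
      _ = 𝟙 M := by rw [biproduct.total, Category.id_comp, hφψ]
  obtain ⟨i, -, y, hy⟩ := exists_not_isNilpotent_mul_of_sum_eq_one hsum
  refine ⟨β i, γ i ≫ y, ?_⟩
  rwa [← Category.assoc]

variable (k) in
lemma finrank_end_lt_of_iso_biprod [HasBinaryBiproducts C] {M X M' : C} (hX : ¬ IsZero X)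
    (e : M ≅ X ⊞ M') : Module.finrank k (M' ⟶ M') < Module.finrank k (M ⟶ M) := by
  have hadd : Module.finrank k (M ⟶ M) = Module.finrank k (M ⟶ X) + Module.finrank k (M ⟶ M') := by
    simp only [← preRank_id, preRank_eq_of_iso k _ e, preRank_biprod]
  have hepi : Epi (e.hom ≫ (biprod.snd : X ⊞ M' ⟶ M')) := inferInstance
  have hle : Module.finrank k (M' ⟶ M') ≤ Module.finrank k (M ⟶ M') :=
    LinearMap.finrank_le_finrank_of_injective (f := Linear.leftComp k M' (e.hom ≫ biprod.snd))
      fun _ _ => (cancel_epi _).1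
  have hne : e.hom ≫ (biprod.fst : X ⊞ M' ⟶ X) ≠ 0 := fun h0 => hX <| by
    rw [IsZero.iff_id_eq_zero]
    simpa using (biprod.inl ≫ e.inv) ≫= h0
  have := Module.finrank_pos_iff_exists_ne_zero (R := k).2 ⟨_, hne⟩
  omega

lemma isZero_of_preRank_eq {M N : C} (hM : IsZero M)
    (h : ∀ {A B : C} (φ : A ⟶ B), preRank k φ M = preRank k φ N) : IsZero N := by
  have hdim : Module.finrank k (N ⟶ N) = 0 := by
    have : Subsingleton (N ⟶ M) := ⟨hM.eq_of_tgt⟩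
    rw [← preRank_id, ← h, preRank_id, Module.finrank_zero_of_subsingleton]
  have := Module.finrank_zero_iff.1 hdim
  exact (IsZero.iff_id_eq_zero N).2 (Subsingleton.elim _ _)

lemma nonempty_iso_of_preRank_eq_of_isIdempotentComplete [HasFiniteBiproducts C]
    [IsIdempotentComplete C] {M N : C}
    (h : ∀ {A B : C} (φ : A ⟶ B), preRank k φ M = preRank k φ N) : Nonempty (M ≅ N) := by
  induction hd : Module.finrank k (M ⟶ M) using Nat.strong_induction_on generalizing M N with
  | _ d ih =>
    by_cases hM : IsZero M
    · exact ⟨hM.iso (isZero_of_preRank_eq hM h)⟩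
    obtain ⟨β, γ, hβγ⟩ := exists_not_isNilpotent_comp hM h
    obtain ⟨X, hX, ⟨hXM⟩, ⟨hXN⟩⟩ := exists_retract_of_not_isNilpotent_comp k β γ hβγ
    have := hasBinaryBiproducts_of_finite_biproducts C
    obtain ⟨M', ⟨eM⟩⟩ := exists_iso_biprod_of_retract hXM
    obtain ⟨N', ⟨eN⟩⟩ := exists_iso_biprod_of_retract hXN
    have h' {A B : C} (φ : A ⟶ B) : preRank k φ M' = preRank k φ N' := by
      have := h φ
      rw [preRank_eq_of_iso k φ eM, preRank_eq_of_iso k φ eN, preRank_biprod,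
        preRank_biprod] at this
      omega
    obtain ⟨e⟩ := ih _ (hd ▸ finrank_end_lt_of_iso_biprod k hX eM) h' rfl
    exact ⟨eM ≪≫ biprod.mapIso (Iso.refl X) e ≪≫ eN.symm⟩

end CommonSummands

section Karoubi

open Idempotents

variable (k : Type*) {C : Type*} [Field k] [Category* C] [Preadditive C] [Linear k C]

/-- The scalar multiplication of the underlying morphisms in `C`. -/
instance karoubiHomSMul (P Q : Karoubi C) : SMul k (P ⟶ Q) where
  smul r f := ⟨r • f.f, by rw [Linear.smul_comp, Linear.comp_smul, Karoubi.Hom.comm]⟩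

/-- The Karoubi envelope of a linear category is linear. -/
instance karoubiLinear : Linear k (Karoubi C) where
  homModule P Q := Function.Injective.module k (Karoubi.inclusionHom P Q)
    (fun f g => Karoubi.hom_ext f g) fun _ _ => rfl
  smul_comp _ _ _ _ _ _ := Karoubi.hom_ext _ _ (Linear.smul_comp _ _ _ _ _ _)
  comp_smul _ _ _ _ _ _ := Karoubi.hom_ext _ _ (Linear.comp_smul _ _ _ _ _ _)

/-- The linear inclusion of a morphism space of the Karoubi envelope into one of `C`, used to
compare dimensions and ranks in the two categories. -/
def karoubiHomInclusion (P Q : Karoubi C) : (P ⟶ Q) →ₗ[k] (P.X ⟶ Q.X) where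
  toFun f := f.f
  map_add' _ _ := rfl
  map_smul' _ _ := rfl

lemma karoubiHomInclusion_injective (P Q : Karoubi C) :
    Function.Injective (karoubiHomInclusion k P Q) :=
  fun f g => Karoubi.hom_ext f g

lemma preRank_toKaroubi {P Q : Karoubi C} (φ : P ⟶ Q) (M : C) :
    preRank k φ ((toKaroubi C).obj M) = preRank k φ.f M := by
  have hrange : (LinearMap.range (Linear.leftComp k ((toKaroubi C).obj M) φ)).map
      (karoubiHomInclusion k P ((toKaroubi C).obj M)) =
      LinearMap.range (Linear.leftComp k M φ.f) := by
    refine le_antisymm (fun _ => ?_) fun _ => ?_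
    · rintro ⟨_, ⟨x, rfl⟩, rfl⟩
      exact ⟨x.f, rfl⟩
    · rintro ⟨x, rfl⟩
      exact ⟨_, ⟨⟨Q.p ≫ x, by simp⟩, rfl⟩, by simp [karoubiHomInclusion]⟩
  rw [preRank, preRank, ← hrange]
  exact (Submodule.equivMapOfInjective _ (karoubiHomInclusion_injective k P _) _).finrank_eq

lemma nonempty_iso_of_preRank_eq [HasFiniteBiproducts C] [∀ X Y : C, FiniteDimensional k (X ⟶ Y)]
    {M N : C} (h : ∀ {A B : C} (φ : A ⟶ B), preRank k φ M = preRank k φ N) : Nonempty (M ≅ N) := by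
  have (P Q : Karoubi C) : FiniteDimensional k (P ⟶ Q) :=
    FiniteDimensional.of_injective _ (karoubiHomInclusion_injective k P Q)
  obtain ⟨e⟩ := nonempty_iso_of_preRank_eq_of_isIdempotentComplete (k := k)
    (M := (toKaroubi C).obj M) (N := (toKaroubi C).obj N) fun φ => by
      rw [preRank_toKaroubi, preRank_toKaroubi, h]
  exact ⟨(toKaroubi C).preimageIso e⟩

end Karoubi

section LongExactSequences

variable {k : Type*} [Field k]

lemma finrank_map_add_finrank_inf_ker {V W : Type*} [AddCommGroup V] [Module k V]
    [AddCommGroup W] [Module k W] (q : V →ₗ[k] W) (S : Submodule k V) [FiniteDimensional k S] :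
    Module.finrank k (S.map q) + Module.finrank k ↥(S ⊓ LinearMap.ker q) = Module.finrank k S := by
  have := (q.domRestrict S).finrank_range_add_finrank_ker
  rw [LinearMap.range_domRestrict, LinearMap.ker_domRestrict] at this
  rwa [← Submodule.map_comap_subtype, Submodule.finrank_map_subtype_eq]

lemma finrank_range_comp_add {V₁ V₂ V₃ U₁ U₃ : Type*}
    [AddCommGroup V₁] [Module k V₁] [AddCommGroup V₂] [Module k V₂] [FiniteDimensional k V₂]
    [AddCommGroup V₃] [Module k V₃] [AddCommGroup U₁] [Module k U₁] [AddCommGroup U₃] [Module k U₃]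
    {f : V₁ →ₗ[k] V₂} {p : V₂ →ₗ[k] V₃} {i : U₁ →ₗ[k] V₂} {g : V₂ →ₗ[k] U₃}
    (hfp : LinearMap.range f = LinearMap.ker p) (hig : LinearMap.range i = LinearMap.ker g) :
    Module.finrank k (LinearMap.range (p ∘ₗ i)) + Module.finrank k (LinearMap.range g) +
        Module.finrank k (LinearMap.range f) =
      Module.finrank k V₂ + Module.finrank k (LinearMap.range (g ∘ₗ f)) := by
  rw [LinearMap.range_comp, LinearMap.range_comp]
  -- The kernels of `p` on `range i` and of `g` on `range f` are both `range i ⊓ range f`.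
  have hp := finrank_map_add_finrank_inf_ker p (LinearMap.range i)
  have hg := finrank_map_add_finrank_inf_ker g (LinearMap.range f)
  have hrank := g.finrank_range_add_finrank_ker
  rw [← hfp] at hp
  rw [← hig, inf_comm] at hg
  rw [← hig] at hrank
  omega

variable (k) in
/-- The rank of postcomposition with `φ`, as a linear map `(W ⟶ A) → (W ⟶ B)`. The ranks of `φ` and
its shift determine the dimension of `Hom(W, cone φ)` (`finrank_hom_fiber_add`). -/
noncomputable def postRank {C : Type*} [Category* C] [Preadditive C] [Linear k C] (W : C)
    {A B : C} (φ : A ⟶ B) : ℕ :=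
  Module.finrank k (LinearMap.range (Linear.rightComp k W φ))

section Neg

variable {C : Type*} [Category* C] [Preadditive C] [Linear k C] {A B : C}

lemma preRank_neg (φ : A ⟶ B) (M : C) : preRank k (-φ) M = preRank k φ M := by
  have : Linear.leftComp k M (-φ) = -Linear.leftComp k M φ :=
    LinearMap.ext fun x => Preadditive.neg_comp φ x
  rw [preRank, this, LinearMap.range_neg, preRank]

lemma postRank_neg (W : C) (φ : A ⟶ B) : postRank k W (-φ) = postRank k W φ := by
  have : Linear.rightComp k W (-φ) = -Linear.rightComp k W φ :=
    LinearMap.ext fun x => Preadditive.comp_neg x φ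
  rw [postRank, this, LinearMap.range_neg, postRank]

end Neg

variable {C : Type*} [Category* C] [Preadditive C] [HasZeroObject C] [HasShift C ℤ]
  [∀ n : ℤ, (shiftFunctor C n).Additive] [Pretriangulated C] [Linear k C]

lemma range_leftComp_eq_ker (M : C) {T : Triangle C} (hT : T ∈ distTriang C) :
    LinearMap.range (Linear.leftComp k M T.mor₂) = LinearMap.ker (Linear.leftComp k M T.mor₁) := by
  refine le_antisymm ?_ fun x hx => ?_
  · rintro _ ⟨y, rfl⟩
    simp [comp_distTriang_mor_zero₁₂_assoc T hT]
  · obtain ⟨y, rfl⟩ := T.yoneda_exact₂ hT x hx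
    exact ⟨y, rfl⟩

lemma range_rightComp_eq_ker (W : C) {T : Triangle C} (hT : T ∈ distTriang C) :
    LinearMap.range (Linear.rightComp k W T.mor₁) =
      LinearMap.ker (Linear.rightComp k W T.mor₂) := by
  refine le_antisymm ?_ fun x hx => ?_
  · rintro _ ⟨y, rfl⟩
    simp [comp_distTriang_mor_zero₁₂ T hT]
  · obtain ⟨y, rfl⟩ := T.coyoneda_exact₂ hT x hx
    exact ⟨y, rfl⟩

variable [∀ X Y : C, FiniteDimensional k (X ⟶ Y)]

lemma finrank_obj₂_hom (M : C) {T : Triangle C} (hT : T ∈ distTriang C) :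
    Module.finrank k (T.obj₂ ⟶ M) = preRank k T.mor₁ M + preRank k T.mor₂ M := by
  rw [preRank, preRank, range_leftComp_eq_ker M hT, LinearMap.finrank_range_add_finrank_ker]

lemma finrank_hom_obj₂ (W : C) {T : Triangle C} (hT : T ∈ distTriang C) :
    Module.finrank k (W ⟶ T.obj₂) = postRank k W T.mor₁ + postRank k W T.mor₂ := by
  rw [postRank, postRank, range_rightComp_eq_ker W hT, add_comm,
    LinearMap.finrank_range_add_finrank_ker]

lemma finrank_cone_hom_add (M : C) {X Y Z : C} {f : X ⟶ Y} {g : Y ⟶ Z} {h : Z ⟶ X⟦(1 : ℤ)⟧}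
    (hT : Triangle.mk f g h ∈ distTriang C) :
    Module.finrank k (Z ⟶ M) + preRank k f M + preRank k (f⟦(1 : ℤ)⟧') M =
      Module.finrank k (Y ⟶ M) + Module.finrank k (X⟦(1 : ℤ)⟧ ⟶ M) := by
  have hY : Module.finrank k (Y ⟶ M) = preRank k f M + preRank k g M := finrank_obj₂_hom M hT
  have hZ : Module.finrank k (Z ⟶ M) = preRank k g M + preRank k h M :=
    finrank_obj₂_hom M (rot_of_distTriang _ hT)
  have hX : Module.finrank k (X⟦(1 : ℤ)⟧ ⟶ M) = preRank k h M + preRank k (-f⟦(1 : ℤ)⟧') M :=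
    finrank_obj₂_hom M (rot_of_distTriang _ (rot_of_distTriang _ hT))
  rw [preRank_neg] at hX
  omega

lemma finrank_hom_fiber_add (W : C) {X Y Z : C} {f : X ⟶ Y} {g : Y ⟶ Z} {h : Z ⟶ X⟦(1 : ℤ)⟧}
    (hT : Triangle.mk f g h ∈ distTriang C) :
    Module.finrank k (W ⟶ X⟦(1 : ℤ)⟧) + postRank k W g + postRank k W (g⟦(1 : ℤ)⟧') =
      Module.finrank k (W ⟶ Z) + Module.finrank k (W ⟶ Y⟦(1 : ℤ)⟧) := by
  have hT' := rot_of_distTriang _ (rot_of_distTriang _ hT)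
  have hZ : Module.finrank k (W ⟶ Z) = postRank k W g + postRank k W h :=
    finrank_hom_obj₂ W (rot_of_distTriang _ hT)
  have hX : Module.finrank k (W ⟶ X⟦(1 : ℤ)⟧) = postRank k W h + postRank k W (-f⟦(1 : ℤ)⟧') :=
    finrank_hom_obj₂ W hT'
  have hY : Module.finrank k (W ⟶ Y⟦(1 : ℤ)⟧) =
      postRank k W (-f⟦(1 : ℤ)⟧') + postRank k W (-g⟦(1 : ℤ)⟧') :=
    finrank_hom_obj₂ W (rot_of_distTriang _ hT')
  rw [postRank_neg] at hX hY
  rw [postRank_neg] at hY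
  omega

lemma postRank_comp_add (W : C) {A X Q B D : C}
    {i : A ⟶ X} {f : X ⟶ Q} {p : Q ⟶ A⟦(1 : ℤ)⟧} (hf : Triangle.mk i f p ∈ distTriang C)
    {j : B ⟶ Q} {g : Q ⟶ D} {q : D ⟶ B⟦(1 : ℤ)⟧} (hg : Triangle.mk j g q ∈ distTriang C) :
    postRank k W (j ≫ p) + postRank k W g + postRank k W f =
      Module.finrank k (W ⟶ Q) + postRank k W (f ≫ g) := by
  have hcomp {U V Z : C} (x : U ⟶ V) (y : V ⟶ Z) :
      Linear.rightComp k W (x ≫ y) = Linear.rightComp k W y ∘ₗ Linear.rightComp k W x :=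
    LinearMap.ext fun z => (Category.assoc z x y).symm
  rw [postRank, postRank, postRank, postRank, hcomp, hcomp]
  exact finrank_range_comp_add (range_rightComp_eq_ker W (rot_of_distTriang _ hf))
    (range_rightComp_eq_ker W hg)

lemma postRank_shift_comp_add (W : C) {A X Q B D : C}
    {i : A ⟶ X} {f : X ⟶ Q} {p : Q ⟶ A⟦(1 : ℤ)⟧} (hf : Triangle.mk i f p ∈ distTriang C)
    {j : B ⟶ Q} {g : Q ⟶ D} {q : D ⟶ B⟦(1 : ℤ)⟧} (hg : Triangle.mk j g q ∈ distTriang C) :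
    postRank k W ((j ≫ p)⟦(1 : ℤ)⟧') + postRank k W (g⟦(1 : ℤ)⟧') + postRank k W (f⟦(1 : ℤ)⟧') =
      Module.finrank k (W ⟶ Q⟦(1 : ℤ)⟧) + postRank k W ((f ≫ g)⟦(1 : ℤ)⟧') := by
  have rot₃ {T : Triangle C} (hT : T ∈ distTriang C) : T.rotate.rotate.rotate ∈ distTriang C :=
    rot_of_distTriang _ (rot_of_distTriang _ (rot_of_distTriang _ hT))
  have h : postRank k W ((-j⟦(1 : ℤ)⟧') ≫ (-p⟦(1 : ℤ)⟧')) + postRank k W (-g⟦(1 : ℤ)⟧') +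
      postRank k W (-f⟦(1 : ℤ)⟧') =
      Module.finrank k (W ⟶ Q⟦(1 : ℤ)⟧) + postRank k W ((-f⟦(1 : ℤ)⟧') ≫ (-g⟦(1 : ℤ)⟧')) :=
    postRank_comp_add W (rot₃ hf) (rot₃ hg)
  simpa only [Preadditive.neg_comp_neg, postRank_neg, ← Functor.map_comp] using h

end LongExactSequences

section FinrankHom

variable {k C : Type*} [Field k] [Category* C] [Preadditive C] [HasZeroObject C] [HasShift C ℤ]
  [∀ n : ℤ, (shiftFunctor C n).Additive] [Pretriangulated C] [Linear k C]
  [∀ X Y : C, FiniteDimensional k (X ⟶ Y)] {M N : C}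

/-- The long exact sequence of the cone of `φ` shows that the dimensions of morphism spaces
determine the sum of the ranks of `φ` and `φ⟦1⟧`, so the claim descends along shifts. -/
lemma preRank_eq_of_subsingleton_shift
    (h : ∀ W : C, Module.finrank k (W ⟶ M) = Module.finrank k (W ⟶ N)) (n : ℕ) {A B : C}
    (φ : A ⟶ B) [hM : Subsingleton (B⟦(n : ℤ)⟧ ⟶ M)] [hN : Subsingleton (B⟦(n : ℤ)⟧ ⟶ N)] :
    preRank k φ M = preRank k φ N := by
  induction n generalizing A B with
  | zero =>
    have hzero (Z : C) [Subsingleton (B⟦((0 : ℕ) : ℤ)⟧ ⟶ Z)] : preRank k φ Z = 0 := by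
      have : Subsingleton (B ⟶ Z) :=
        (((shiftFunctorZero C ℤ).app B).homFromEquiv (Z := Z)).symm.subsingleton
      rw [preRank, Subsingleton.elim (Linear.leftComp k Z φ) 0, LinearMap.range_zero, finrank_bot]
    rw [hzero M, hzero N]
  | succ n ih =>
    have e : B⟦((n + 1 : ℕ) : ℤ)⟧ ≅ B⟦(1 : ℤ)⟧⟦(n : ℤ)⟧ :=
      (shiftFunctorAdd' C (1 : ℤ) n (n + 1 : ℕ) (by push_cast; ring)).app B
    have := (e.homFromEquiv (Z := M)).symm.subsingleton
    have := (e.homFromEquiv (Z := N)).symm.subsingleton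
    have hshift : preRank k (φ⟦(1 : ℤ)⟧') M = preRank k (φ⟦(1 : ℤ)⟧') N := ih _
    obtain ⟨D, p, q, hT⟩ := distinguished_cocone_triangle φ
    have hM := finrank_cone_hom_add (k := k) M hT
    have hN := finrank_cone_hom_add (k := k) N hT
    rw [h D, h B, h (A⟦(1 : ℤ)⟧)] at hM
    omega

lemma nonempty_iso_of_finrank_hom_eq
    (hvan : ∀ X Y : C, ∀ᶠ n : ℕ in atTop, Subsingleton (X⟦(n : ℤ)⟧ ⟶ Y))
    (h : ∀ W : C, Module.finrank k (W ⟶ M) = Module.finrank k (W ⟶ N)) : Nonempty (M ≅ N) := by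
  refine nonempty_iso_of_preRank_eq k fun {A B} φ => ?_
  obtain ⟨n, _, _⟩ := ((hvan B M).and (hvan B N)).exists
  exact preRank_eq_of_subsingleton_shift h n φ

end FinrankHom

section Extensions

variable {C : Type*} [Category* C] [Preadditive C] [HasZeroObject C] [HasShift C ℤ]
  [∀ n : ℤ, (shiftFunctor C n).Additive] [Pretriangulated C]

/-- `X` is an extension of `B` by `A`: there is a distinguished triangle `A ⟶ X ⟶ B ⟶ A⟦1⟧`. -/
def IsExtension (A X B : C) : Prop :=
  ∃ (f : A ⟶ X) (g : X ⟶ B) (h : B ⟶ A⟦(1 : ℤ)⟧), Triangle.mk f g h ∈ distTriang C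

lemma isExtension_of_distinguished {T : Triangle C} (hT : T ∈ distTriang C) :
    IsExtension T.obj₁ T.obj₂ T.obj₃ :=
  ⟨T.mor₁, T.mor₂, T.mor₃, hT⟩

namespace IsExtension

variable {A X B A' X' B' : C}

lemma of_iso (h : IsExtension A X B) (a : A ≅ A') (x : X ≅ X') (b : B ≅ B') :
    IsExtension A' X' B' := by
  obtain ⟨f, g, h, hT⟩ := h
  have hf : (a.inv ≫ f ≫ x.hom) ≫ x.inv = a.inv ≫ f := by simp
  have hg : (x.inv ≫ g ≫ b.hom) ≫ b.inv = x.inv ≫ g := by simp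
  have hh : (b.inv ≫ h ≫ a.hom⟦(1 : ℤ)⟧') ≫ a.inv⟦(1 : ℤ)⟧' = b.inv ≫ h := by
    simp [← Functor.map_comp]
  exact ⟨_, _, _, isomorphic_distinguished _ hT _
    (Triangle.isoMk (Triangle.mk _ _ _) _ a.symm x.symm b.symm hf hg hh)⟩

lemma shift (h : IsExtension A X B) (n : ℤ) : IsExtension (A⟦n⟧) (X⟦n⟧) (B⟦n⟧) := by
  obtain ⟨f, g, h, hT⟩ := h
  exact isExtension_of_distinguished (Triangle.shift_distinguished _ hT n)

lemma map {D : Type*} [Category* D] [Preadditive D] [HasZeroObject D] [HasShift D ℤ]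
    [∀ n : ℤ, (shiftFunctor D n).Additive] [Pretriangulated D] (F : C ⥤ D) [F.CommShift ℤ]
    [F.IsTriangulated] (h : IsExtension A X B) :
    IsExtension (F.obj A) (F.obj X) (F.obj B) := by
  obtain ⟨f, g, h, hT⟩ := h
  exact isExtension_of_distinguished (F.map_distinguished _ hT)

lemma rotate (h : IsExtension A X B) : IsExtension X B (A⟦(1 : ℤ)⟧) := by
  obtain ⟨f, g, h, hT⟩ := h
  exact isExtension_of_distinguished (rot_of_distTriang _ hT)

lemma nonempty_iso (h : IsExtension A X B) (hB : IsZero B) : Nonempty (A ≅ X) := by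
  obtain ⟨f, g, h, hT⟩ := h
  have : IsIso f := (Triangle.isZero₃_iff_isIso₁ _ hT).1 hB
  exact ⟨asIso f⟩

lemma biprod (h : IsExtension A X B) (h' : IsExtension A' X' B') :
    IsExtension (A ⊞ A') (X ⊞ X') (B ⊞ B') := by
  obtain ⟨f, g, h, hT⟩ := h
  obtain ⟨f', g', h', hT'⟩ := h'
  let S (j : WalkingPair) : Triangle C :=
    WalkingPair.casesOn j (Triangle.mk f g h) (Triangle.mk f' g' h')
  have hS : productTriangle S ∈ distTriang C :=
    productTriangle_distinguished S (by rintro (_ | _) <;> assumption)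
  have e (Z : WalkingPair → C) : ∏ᶜ Z ≅ Z .left ⊞ Z .right :=
    HasLimit.isoOfNatIso (diagramIsoPair (Discrete.functor Z)) ≪≫ (biprod.isoProd _ _).symm
  exact (isExtension_of_distinguished hS).of_iso (e _) (e _) (e _)

end IsExtension

lemma isExtension_biprod (A B : C) : IsExtension A (A ⊞ B) B :=
  isExtension_of_distinguished (binaryBiproductTriangle_distinguished A B)

end Extensions

section OctahedralAxiom

variable (C : Type*) [Category* C] [Preadditive C] [HasZeroObject C] [HasShift C ℤ]
  [∀ n : ℤ, (shiftFunctor C n).Additive] [Pretriangulated C]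

/-- The part of the octahedral axiom that only concerns the existence of extensions: if `X` is an
extension of `Q` by `A` and `Q` is an extension of `D` by `B`, then `X` is an extension of `D` by
an extension of `B` by `A`. This is all that is needed of the
axiom, which `Pretriangulated` omits. -/
def ExtensionsAssoc : Prop :=
  ∀ {A X Q B D : C}, IsExtension A X Q → IsExtension B Q D →
    ∃ Y : C, IsExtension A Y B ∧ IsExtension Y X D

variable {C}

lemma extensionsAssoc_of_finiteDimensional (k : Type*) [Field k] [Linear k C]
    [∀ X Y : C, FiniteDimensional k (X ⟶ Y)]
    (hvan : ∀ X Y : C, ∀ᶠ n : ℕ in atTop, Subsingleton (X⟦(n : ℤ)⟧ ⟶ Y)) : ExtensionsAssoc C := by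
  rintro A X Q B D ⟨i, f, p, hf⟩ ⟨j, g, q, hg⟩
  obtain ⟨Y, y, z, hY⟩ := distinguished_cocone_triangle₁ (f ≫ g)
  obtain ⟨Y', y', z', hY'⟩ := distinguished_cocone_triangle₂ (j ≫ p)
  obtain ⟨e⟩ : Nonempty (Y'⟦(1 : ℤ)⟧ ≅ Y⟦(1 : ℤ)⟧) := by
    refine nonempty_iso_of_finrank_hom_eq (k := k) hvan fun W => ?_
    have hA := finrank_hom_fiber_add (k := k) W hf
    have hB := finrank_hom_fiber_add (k := k) W hg
    have hYdim := finrank_hom_fiber_add (k := k) W hY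
    have hY'dim : Module.finrank k (W ⟶ Y'⟦(1 : ℤ)⟧) + postRank k W (j ≫ p) +
        postRank k W ((j ≫ p)⟦(1 : ℤ)⟧') =
          Module.finrank k (W ⟶ A⟦(1 : ℤ)⟧) + Module.finrank k (W ⟶ B⟦(1 : ℤ)⟧) :=
      finrank_hom_fiber_add W (rot_of_distTriang _ hY')
    have hcomp := postRank_comp_add (k := k) W hf hg
    have hcomp' := postRank_shift_comp_add (k := k) W hf hg
    omega
  exact ⟨Y', ⟨y', z', _, hY'⟩,
    (isExtension_of_distinguished hY).of_iso ((shiftFunctor C (1 : ℤ)).preimageIso e).symm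
      (Iso.refl _) (Iso.refl _)⟩

end OctahedralAxiom

section FiniteType

lemma IsFiniteType.finiteDimensional {C : Type*} [Category* C] [Preadditive C] [HasShift C ℤ]
    [Linear ℂ C] (hft : IsFiniteType C) (X Y : C) : FiniteDimensional ℂ (X ⟶ Y) :=
  have := (hft X Y).2 0
  (Linear.homCongr ℂ (Iso.refl X) ((shiftFunctorZero C ℤ).app Y)).finiteDimensional

lemma IsFiniteType.eventually_subsingleton {C : Type*} [Category* C] [Preadditive C]
    [HasShift C ℤ] [Linear ℂ C] (hft : IsFiniteType C) (X Y : C) :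
    ∀ᶠ n : ℕ in atTop, Subsingleton (X⟦(n : ℤ)⟧ ⟶ Y) := by
  obtain ⟨l, hl⟩ := (hft X Y).1.bddBelow
  filter_upwards [eventually_ge_atTop (1 - l).toNat] with n hn
  have : Subsingleton (X ⟶ (shiftEquiv C (n : ℤ)).inverse.obj Y) := by
    by_contra h
    have := hl h
    omega
  exact ((shiftEquiv C (n : ℤ)).toAdjunction.homEquiv X Y).subsingleton

lemma IsFiniteType.extensionsAssoc {C : Type*} [Category* C] [Preadditive C] [HasZeroObject C]
    [HasShift C ℤ] [∀ n : ℤ, (shiftFunctor C n).Additive] [Pretriangulated C] [Linear ℂ C]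
    (hft : IsFiniteType C) : ExtensionsAssoc C :=
  have := hft.finiteDimensional
  extensionsAssoc_of_finiteDimensional ℂ hft.eventually_subsingleton

end FiniteType

section Towers

open scoped ZeroObject

/-- The cost `exp (n t)` of attaching a copy of the building block shifted by `n`. -/
noncomputable def shiftCost (t : ℝ) (n : ℤ) : ℝ≥0∞ :=
  ENNReal.ofReal (Real.exp (n * t))

lemma shiftCost_add (t : ℝ) (m n : ℤ) :
    shiftCost t (m + n) = shiftCost t m * shiftCost t n := by
  rw [shiftCost, shiftCost, shiftCost, ← ENNReal.ofReal_mul (Real.exp_pos _).le, ← Real.exp_add,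
    Int.cast_add, add_mul]

/-- The isomorphism by which an additive functor commutes with binary biproducts. -/
noncomputable def mapBiprodIso {C D : Type*} [Category* C] [Category* D] [Preadditive C]
    [Preadditive D] [HasBinaryBiproducts C] [HasBinaryBiproducts D] (F : C ⥤ D) [F.Additive]
    (X Y : C) : F.obj (X ⊞ Y) ≅ F.obj X ⊞ F.obj Y :=
  have := preservesBinaryBiproduct_of_preservesBiproduct F X Y
  F.mapBiprod X Y

variable {C : Type*} [Category* C] [Preadditive C] [HasZeroObject C] [HasShift C ℤ]
  [∀ n : ℤ, (shiftFunctor C n).Additive] [Pretriangulated C]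

/-- `BuiltFrom t M c X`: the object `X` is obtained from zero by finitely many extensions by shifts
of `M`, with total cost `c`. This is the inductive form of the towers in the definition of
`complexity`. -/
inductive BuiltFrom (t : ℝ) (M : C) : ℝ≥0∞ → C → Prop
  | zero {X : C} (hX : IsZero X) : BuiltFrom t M 0 X
  | step {c : ℝ≥0∞} {A X : C} (n : ℤ) (hA : BuiltFrom t M c A) (h : IsExtension A X (M⟦n⟧)) :
      BuiltFrom t M (c + shiftCost t n) X

lemma builtFrom_self (t : ℝ) (M : C) : BuiltFrom t M (shiftCost t 0) M := by
  have e : 0 ⊞ M⟦(0 : ℤ)⟧ ≅ M :=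
    (isoZeroBiprod (isZero_zero C)).symm ≪≫ (shiftFunctorZero C ℤ).app M
  rw [← zero_add (shiftCost t 0)]
  exact .step 0 (.zero (isZero_zero C))
    ((isExtension_biprod 0 (M⟦(0 : ℤ)⟧)).of_iso (Iso.refl _) e (Iso.refl _))

namespace BuiltFrom

variable {t : ℝ} {M X Y : C} {c : ℝ≥0∞}

lemma of_iso (h : BuiltFrom t M c X) (e : X ≅ Y) : BuiltFrom t M c Y := by
  cases h with
  | zero hX => exact .zero (hX.of_iso e.symm)
  | step n hA h => exact .step n hA (h.of_iso (Iso.refl _) e (Iso.refl _))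

lemma ne_top (h : BuiltFrom t M c X) : c ≠ ⊤ := by
  induction h with
  | zero => exact ENNReal.zero_ne_top
  | step n _ _ ih => exact ENNReal.add_ne_top.2 ⟨ih, ENNReal.ofReal_ne_top⟩

lemma shift (h : BuiltFrom t M c X) (n : ℤ) : BuiltFrom t M (c * shiftCost t n) (X⟦n⟧) := by
  induction h with
  | zero hX =>
    rw [zero_mul]
    exact .zero ((shiftFunctor C n).map_isZero hX)
  | step m _ h ih =>
    rw [add_mul, ← shiftCost_add]
    exact .step _ ih ((h.shift n).of_iso (Iso.refl _) (Iso.refl _)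
      ((shiftFunctorAdd C m n).app M).symm)

lemma map {D : Type*} [Category* D] [Preadditive D] [HasZeroObject D] [HasShift D ℤ]
    [∀ n : ℤ, (shiftFunctor D n).Additive] [Pretriangulated D] (F : C ⥤ D) [F.CommShift ℤ]
    [F.IsTriangulated] (h : BuiltFrom t M c X) : BuiltFrom t (F.obj M) c (F.obj X) := by
  induction h with
  | zero hX => exact .zero (F.map_isZero hX)
  | step n _ h ih =>
    exact .step n ih ((h.map F).of_iso (Iso.refl _) (Iso.refl _) ((F.commShiftIso n).app M))

lemma extension (hC : ExtensionsAssoc C) {d : ℝ≥0∞} {Z : C} (hX : BuiltFrom t M c X)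
    (hZ : BuiltFrom t M d Z) (h : IsExtension X Y Z) : BuiltFrom t M (c + d) Y := by
  induction hZ generalizing Y with
  | zero hZ =>
    obtain ⟨e⟩ := h.nonempty_iso hZ
    rw [add_zero]
    exact hX.of_iso e
  | step n _ hn ih =>
    obtain ⟨Y', hY', hY⟩ := hC h hn
    rw [← add_assoc]
    exact .step n (ih hY') hY

lemma subst (hC : ExtensionsAssoc C) {B B' : C} {d : ℝ≥0∞} (hX : BuiltFrom t B d X)
    (hB : BuiltFrom t M c (B ⊞ B')) : ∃ X' : C, BuiltFrom t M (d * c) (X ⊞ X') := by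
  induction hX with
  | zero hX =>
    rw [zero_mul]
    exact ⟨0, .zero (hX.of_iso (isoBiprodZero (isZero_zero C)).symm)⟩
  | step n _ hn ih =>
    obtain ⟨A', hA'⟩ := ih
    rw [add_mul, mul_comm (shiftCost t n)]
    exact ⟨A' ⊞ B'⟦n⟧, hA'.extension hC ((hB.shift n).of_iso (mapBiprodIso _ B B'))
      (hn.biprod (isExtension_biprod A' (B'⟦n⟧)))⟩

lemma of_tower {p : ℕ} {n : Fin p → ℤ} {A : Fin (p + 1) → C} (hA : IsZero (A 0))
    (h : ∀ i : Fin p, IsExtension (A i.castSucc) (A i.succ) (M⟦n i⟧)) :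
    BuiltFrom t M (∑ i, shiftCost t (n i)) (A (Fin.last p)) := by
  induction p with
  | zero => simpa using BuiltFrom.zero hA
  | succ p ih =>
    rw [Fin.sum_univ_castSucc]
    exact .step _ (ih (A := fun i => A i.castSucc) hA fun i => h i.castSucc) (h (Fin.last p))

lemma exists_tower (hX : BuiltFrom t M c X) :
    ∃ (p : ℕ) (n : Fin p → ℤ) (A : Fin (p + 1) → C), IsZero (A 0) ∧ A (Fin.last p) = X ∧
      (∀ i : Fin p, IsExtension (A i.castSucc) (A i.succ) (M⟦n i⟧)) ∧
      c = ∑ i, shiftCost t (n i) := by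
  induction hX with
  | @zero X hX => exact ⟨0, Fin.elim0, fun _ => X, hX, rfl, fun i => i.elim0, by simp⟩
  | @step c B X m _ hm ih =>
    obtain ⟨p, n, A, h0, rfl, h, rfl⟩ := ih
    refine ⟨p + 1, Fin.snoc (α := fun _ => ℤ) n m, Fin.snoc (α := fun _ => C) A X, ?_,
      Fin.snoc_last .., fun i => ?_, by simp [Fin.sum_univ_castSucc]⟩
    · rwa [← Fin.castSucc_zero, Fin.snoc_castSucc]
    · cases i using Fin.lastCases with
      | last => simpa only [Fin.succ_last, Fin.snoc_last, Fin.snoc_castSucc] using hm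
      | cast i => simpa only [Fin.succ_castSucc, Fin.snoc_castSucc] using h i

end BuiltFrom

lemma isThick_setOf_builtFrom (hC : ExtensionsAssoc C) (t : ℝ) (M : C) :
    IsThick C {X : C | ∃ (c : ℝ≥0∞) (X' : C), BuiltFrom t M c (X ⊞ X')} where
  mem_of_iso := by
    rintro X Y e ⟨c, X', h⟩
    exact ⟨c, X', h.of_iso (biprod.mapIso e (Iso.refl _))⟩
  shift_mem := by
    rintro X n ⟨c, X', h⟩
    exact ⟨_, _, (h.shift n).of_iso (mapBiprodIso _ X X')⟩
  cone_mem := by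
    rintro T hT ⟨c, X', h⟩ ⟨d, Y', h'⟩
    exact ⟨_, _, h'.extension hC ((h.shift 1).of_iso (mapBiprodIso _ _ _))
      ((isExtension_of_distinguished hT).rotate.biprod (isExtension_biprod Y' (X'⟦(1 : ℤ)⟧)))⟩
  summand_mem := by
    rintro X Y ⟨c, X', h⟩
    exact ⟨c, _, h.of_iso (biprod.associator X Y X')⟩

lemma exists_builtFrom_of_mem_thickClosure (hC : ExtensionsAssoc C) (t : ℝ) {M X : C}
    (hX : X ∈ thickClosure C M) : ∃ (c : ℝ≥0∞) (X' : C), BuiltFrom t M c (X ⊞ X') :=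
  hX _ ⟨isThick_setOf_builtFrom hC t M, _, _,
    (builtFrom_self t M).of_iso (isoBiprodZero (isZero_zero C))⟩

end Towers

section Complexity

variable {C : Type*} [Category* C] [Preadditive C] [HasZeroObject C] [HasShift C ℤ]
  [∀ n : ℤ, (shiftFunctor C n).Additive] [Pretriangulated C]

lemma complexity_eq_sInf (t : ℝ) {M N : C} (hN : ¬ IsZero N) (hMN : N ∈ thickClosure C M) :
    complexity C t M N = sInf {c | ∃ N' : C, BuiltFrom t M c (N ⊞ N')} := by
  rw [complexity, if_neg hN, if_pos hMN]
  congr 1 with c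
  constructor
  · rintro ⟨p, -, n, A, N', hA0, ⟨e⟩, hA, rfl⟩
    exact ⟨N', (BuiltFrom.of_tower hA0 hA).of_iso e⟩
  · rintro ⟨N', h⟩
    obtain ⟨p, n, A, hA0, hAN, hA, rfl⟩ := h.exists_tower
    have hp : p ≠ 0 := by
      rintro rfl
      exact hN ((biprod_isZero_iff N N').1 (hAN ▸ hA0)).1
    exact ⟨p, Nat.pos_of_ne_zero hp, n, A, N', hA0, ⟨eqToIso hAN⟩, hA, rfl⟩

lemma complexity_le {t : ℝ} {M N N' : C} {c : ℝ≥0∞} (hMN : N ∈ thickClosure C M)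
    (h : BuiltFrom t M c (N ⊞ N')) : complexity C t M N ≤ c := by
  by_cases hN : IsZero N
  · rw [complexity, if_pos hN]
    exact zero_le
  · rw [complexity_eq_sInf t hN hMN]
    exact sInf_le ⟨N', h⟩

variable {D : Type*} [Category* D] [Preadditive D] [HasZeroObject D] [HasShift D ℤ]
  [∀ n : ℤ, (shiftFunctor D n).Additive] [Pretriangulated D]

lemma exists_complexity_map_le (hD : ExtensionsAssoc D) (t : ℝ) (G : C) {G' : D}
    (hG' : IsSplitGenerator D G') (F : C ⥤ D) [F.CommShift ℤ] [F.IsTriangulated] :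
    ∃ K : ℝ≥0∞, K ≠ ⊤ ∧ ∀ N ∈ thickClosure C G,
      complexity D t G' (F.obj N) ≤ complexity C t G N * K := by
  obtain ⟨K, B', hK⟩ := exists_builtFrom_of_mem_thickClosure hD t (hG' (F.obj G))
  -- Multiplication by `K + 1 ≠ 0` commutes with every infimum, multiplication by `0` does not.
  have hK1 : K + 1 ≠ ⊤ := ENNReal.add_ne_top.2 ⟨hK.ne_top, ENNReal.one_ne_top⟩
  refine ⟨K + 1, hK1, fun N hN => ?_⟩
  by_cases hN0 : IsZero N
  · rw [complexity, if_pos (F.map_isZero hN0)]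
    exact zero_le
  have hle (c : {c | ∃ N' : C, BuiltFrom t G c (N ⊞ N')}) :
      complexity D t G' (F.obj N) ≤ c * (K + 1) := by
    obtain ⟨c, N', hN'⟩ := c
    obtain ⟨X', hX'⟩ := ((hN'.map F).of_iso (mapBiprodIso F N N')).subst hD hK
    have hFN : complexity D t G' (F.obj N) ≤ c * K :=
      complexity_le (hG' _) (hX'.of_iso (biprod.associator _ _ _))
    exact hFN.trans (by gcongr; exact le_self_add)
  rw [complexity_eq_sInf t hN0 hN, sInf_eq_iInf', ENNReal.iInf_mul_of_ne (by simp) hK1]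
  exact le_iInf hle

end Complexity

section Growth

open LinearGrowth ExpGrowth

lemma coe_sub_coe_sub_cancel (k : ℝ) (x : EReal) : (k : EReal) - (k - x) = x := by
  rw [sub_eq_add_neg, EReal.neg_sub (.inl (EReal.coe_ne_bot k)) (.inl (EReal.coe_ne_top k)),
    add_comm, add_comm _ x, ← sub_eq_add_neg, EReal.sub_add_cancel]

lemma linearGrowthSup_coe_mul_sub (k : ℝ) (w : ℕ → EReal) :
    linearGrowthSup (fun n => k * n - w n) = k - linearGrowthInf w := by
  have hlin : linearGrowthSup (fun n : ℕ => (k : EReal) * n) = k := linearGrowthSup_const_mul_self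
  have hlin' : linearGrowthInf (fun n : ℕ => (k : EReal) * n) = k := linearGrowthInf_const_mul_self
  have hneg : linearGrowthSup (-w) = -linearGrowthInf w := linearGrowthSup_inv
  apply le_antisymm
  · have h := linearGrowthSup_add_le (u := fun n : ℕ => (k : EReal) * n) (v := -w)
      (.inl (by simp [hlin])) (.inl (by simp [hlin]))
    rwa [hlin, hneg] at h
  · have h := le_linearGrowthSup_add' (u := fun n : ℕ => (k : EReal) * n) (v := -w)
    rwa [hlin', hneg] at h

lemma linearGrowthSup_comp_mul {u : ℕ → EReal} {k : ℝ} (hu : ∀ n, u (n + 1) ≤ u n + k) {m : ℕ}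
    (hm : m ≠ 0) : linearGrowthSup (fun n => u (m * n)) = m * linearGrowthSup u := by
  have hcoe (n : ℕ) : (k : EReal) * n = ((k * n : ℝ) : EReal) := by simp
  set w : ℕ → EReal := fun n => k * n - u n with hw
  have hw_mono : Monotone w := by
    refine monotone_nat_of_le_succ fun n => ?_
    calc w n = k * (n + 1 : ℕ) - (u n + k) := by
          simp only [hw, hcoe]
          induction u n <;> norm_cast
          push_cast; ring
      _ ≤ w (n + 1) := EReal.sub_le_sub le_rfl (hu n)
  have hu_eq (n : ℕ) : u n = k * n - w n := by simp only [hw, hcoe, coe_sub_coe_sub_cancel]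
  have hum_eq (n : ℕ) : u (m * n) = (k * m : ℝ) * n - w (m * n) := by
    rw [hu_eq]; push_cast; rw [mul_assoc]
  calc linearGrowthSup (fun n => u (m * n))
      = (k * m : ℝ) - linearGrowthInf (fun n => w (m * n)) := by
        simp only [hum_eq, linearGrowthSup_coe_mul_sub]
    _ = m * k - m * linearGrowthInf w := by
        rw [hw_mono.linearGrowthInf_comp_mul hm]; push_cast; rw [mul_comm]
    _ = m * (k - linearGrowthInf w) :=
        (EReal.mul_sub_of_nonneg_of_ne_top (Nat.cast_nonneg' m) (EReal.natCast_ne_top m)).symm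
    _ = m * linearGrowthSup u := by
        rw [← linearGrowthSup_coe_mul_sub, ← funext hu_eq]

lemma expGrowthSup_comp_mul {a : ℕ → ℝ≥0∞} {K : ℝ≥0∞} (hK : K ≠ ⊤)
    (ha : ∀ n, a (n + 1) ≤ a n * K) {m : ℕ} (hm : m ≠ 0) :
    expGrowthSup (fun n => a (m * n)) = m * expGrowthSup a := by
  refine linearGrowthSup_comp_mul (u := fun n => (a n).log) (k := K.log.toReal) (fun n => ?_) hm
  calc (a (n + 1)).log ≤ (a n * K).log := ENNReal.log_monotone (ha n)
    _ = (a n).log + K.log := ENNReal.log_mul_add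
    _ ≤ (a n).log + K.log.toReal := by
        gcongr
        exact EReal.le_coe_toReal (by simpa using hK)

end Growth

section Entropy

lemma iter_add_obj {C : Type*} [Category* C] (F : C ⥤ C) (a b : ℕ) (X : C) :
    (iter C F (a + b)).obj X = (iter C F b).obj ((iter C F a).obj X) := by
  induction b with
  | zero => rfl
  | succ b ih => exact congrArg F.obj ih

lemma iter_iter_obj {C : Type*} [Category* C] (F : C ⥤ C) (m n : ℕ) (X : C) :
    (iter C (iter C F m) n).obj X = (iter C F (m * n)).obj X := by
  induction n with
  | zero => rfl
  | succ n ih =>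
    rw [Nat.mul_succ, iter_add_obj F (m * n), ← ih]
    rfl

variable {C : Type*} [Category* C] [Preadditive C] [HasZeroObject C] [HasShift C ℤ]
  [∀ n : ℤ, (shiftFunctor C n).Additive] [Pretriangulated C]

lemma entropy_eq_expGrowthSup (F : C ⥤ C) (G : C) (t : ℝ) :
    entropy C F G t =
      ExpGrowth.expGrowthSup fun n => complexity C t G ((iter C F n).obj G) := by
  refine limsup_congr (.of_forall fun n => ?_)
  rw [EReal.div_eq_inv_mul, EReal.coe_inv, EReal.coe_natCast]

theorem statement_9_general (hC : ExtensionsAssoc C) {G : C} (hG : IsSplitGenerator C G)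
    (F : C ⥤ C) [F.CommShift ℤ] [F.IsTriangulated] {m : ℕ} (hm : 1 ≤ m) (t : ℝ) :
    entropy C (iter C F m) G t = (m : ℝ) * entropy C F G t := by
  obtain ⟨K, hK, hle⟩ := exists_complexity_map_le hC t G hG F
  simp only [entropy_eq_expGrowthSup, iter_iter_obj, EReal.coe_natCast]
  exact expGrowthSup_comp_mul (a := fun n => complexity C t G ((iter C F n).obj G)) hK
    (fun n => hle _ (hG _)) (Nat.one_le_iff_ne_zero.1 hm)

end Entropy

/-- `h_t(F^m) = m · h_t(F)` for `m ≥ 1`. -/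
theorem statement_9 {C : Type u} [Category.{v} C] [Preadditive C] [HasZeroObject C]
    [HasShift C ℤ] [∀ n : ℤ, (shiftFunctor C n).Additive] [Pretriangulated C] [Linear ℂ C]
    (hC : ∃ X : C, ¬ IsZero X) (hft : IsFiniteType C)
    (G : C) (hG : IsSplitGenerator C G)
    (F : C ⥤ C) [F.Additive] [F.Linear ℂ] [F.CommShift ℤ] [F.IsTriangulated]
    (hF : ∀ n : ℕ, ¬ IsZero ((iter C F n).obj G))
    (m : ℕ) (hm : 1 ≤ m) (t : ℝ) :
    entropy C (iter C F m) G t = (((m : ℝ)) : EReal) * entropy C F G t := by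
  exact statement_9_general hft.extensionsAssoc hG F hm t

end CatEntropy
end

section
/- Let T be a ℂ-linear triangulated category of finite type with split-generator G, and let F₁, F₂ be triangulated endofunctors of T with F₁ⁿG ≇ 0, F₂ⁿG ≇ 0 and (F₁F₂)ⁿG ≇ 0 for all n ≥ 0. If F₁F₂ ≅ F₂F₁, then h_t(F₁F₂) ≤ h_t(F₁) + h_t(F₂) for all t ∈ ℝ. -/
/-!
Call `c` a cost of `N` over `M` if `N` is a retract of an iterated extension of shifts `M⟦n⟧` with
`∑ exp (n t) = c`, so that `δ(M, N)` is the infimum of all costs. Costs multiply under substitution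
and are preserved by triangulated functors; hence `δ(M, L) ≤ δ(M, N) δ(N, L)` and
`δ(H M, H N) ≤ δ(M, N)`. Since `(F₁ F₂)ᵐ G ≅ F₁ᵐ F₂ᵐ G`, this gives
`δ(G, (F₁ F₂)ᵐ G) ≤ δ(G, F₁ᵐ G) δ(F₁ᵐ G, F₁ᵐ F₂ᵐ G) ≤ δ(G, F₁ᵐ G) δ(G, F₂ᵐ G)`, and it remains to
take logarithms, divide by `m` and pass to the `limsup`, where no `∞ - ∞` occurs because
`δ(G, Fᵐ G) ≤ δ(G, F G)ᵐ`.

Substitution rests on the associativity of extensions, usually the octahedral axiom, which is not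
part of `Pretriangulated`. Up to retracts, however, associativity holds without it. Let `E` be an
extension of `M` by `A`, and `M` an extension of `D` by `B`. Pull `E` back to an extension `Q` of
`B` by `A`. The fibre `P` of `E ⟶ M ⟶ D` maps to `Q` over `E`, and pushing the extension
`P ⟶ E ⟶ D` out along `P ⟶ Q` gives an extension `E'` of `D` by `Q`; the identity of `E` and
`Q ⟶ E` together define a retraction of `E ⟶ E'`.
-/

open CategoryTheory Limits Pretriangulated Filter
open scoped ENNReal

universe u v u₂ v₂

namespace CatEntropy

section Pretriangulated

open scoped ZeroObject

variable {C : Type u} [Category.{v} C] [Preadditive C] [HasZeroObject C]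
  [HasShift C ℤ] [∀ n : ℤ, (shiftFunctor C n).Additive] [Pretriangulated C]

/-! ### Extensions -/

lemma exists_weakPullback_of_distTriang {A E M B : C} {i : A ⟶ E} {e : E ⟶ M}
    {m : M ⟶ A⟦(1 : ℤ)⟧} (hT : Triangle.mk i e m ∈ distTriang C) (g : B ⟶ M) :
    ∃ (Q : C) (j : A ⟶ Q) (b : Q ⟶ B) (γ : Q ⟶ E),
      Triangle.mk j b (g ≫ m) ∈ distTriang C ∧ γ ≫ e = b ≫ g ∧
      ∀ {Z : C} (x : Z ⟶ E) (y : Z ⟶ B), x ≫ e = y ≫ g → ∃ z : Z ⟶ Q, z ≫ γ = x ∧ z ≫ b = y := by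
  obtain ⟨Q, j, b, hQ⟩ := distinguished_cocone_triangle₂ (g ≫ m)
  obtain ⟨γ, hjγ, hγe⟩ : ∃ γ : Q ⟶ E, j ≫ γ = 𝟙 A ≫ i ∧ b ≫ g = γ ≫ e :=
    complete_distinguished_triangle_morphism₂ _ _ hQ hT (𝟙 A) g (by
      change (g ≫ m) ≫ (𝟙 A)⟦(1 : ℤ)⟧' = g ≫ m
      simp)
  rw [Category.id_comp] at hjγ
  have hjb : j ≫ b = 0 := comp_distTriang_mor_zero₁₂ _ hQ
  have hem : e ≫ m = 0 := comp_distTriang_mor_zero₂₃ _ hT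
  refine ⟨Q, j, b, γ, hQ, hγe.symm, fun x y hxy => ?_⟩
  obtain ⟨z, hz⟩ : ∃ z, y = z ≫ b :=
    Triangle.coyoneda_exact₃ _ hQ y (show y ≫ g ≫ m = 0 by rw [← reassoc_of% hxy, hem, comp_zero])
  obtain ⟨w, hw⟩ : ∃ w, z ≫ γ - x = w ≫ i :=
    Triangle.coyoneda_exact₂ _ hT _ (show (z ≫ γ - x) ≫ e = 0 by simp [← hγe, hxy, hz])
  exact ⟨z - w ≫ j, by simp [hjγ, ← hw], by simp [hjb, hz]⟩

lemma exists_weakPushout_of_distTriang {P E D Q : C} {p : P ⟶ E} {d : E ⟶ D}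
    {q : D ⟶ P⟦(1 : ℤ)⟧} (hT : Triangle.mk p d q ∈ distTriang C) (β : P ⟶ Q) :
    ∃ (E' : C) (k : Q ⟶ E') (d' : E' ⟶ D) (j : E ⟶ E'),
      Triangle.mk k d' (q ≫ β⟦(1 : ℤ)⟧') ∈ distTriang C ∧ p ≫ j = β ≫ k ∧
      ∀ {Z : C} (x : E ⟶ Z) (y : Q ⟶ Z), p ≫ x = β ≫ y →
        ∃ z : E' ⟶ Z, j ≫ z = x ∧ k ≫ z = y := by
  obtain ⟨E', k, d', hE'⟩ := distinguished_cocone_triangle₂ (q ≫ β⟦(1 : ℤ)⟧')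
  obtain ⟨j, hpj, hjd⟩ : ∃ j : E ⟶ E', p ≫ j = β ≫ k ∧ d ≫ 𝟙 D = j ≫ d' :=
    complete_distinguished_triangle_morphism₂ _ _ hT hE' β (𝟙 D)
      (Category.id_comp _).symm
  rw [Category.comp_id] at hjd
  have hkd : k ≫ d' = 0 := comp_distTriang_mor_zero₁₂ _ hE'
  have hqp : q ≫ p⟦(1 : ℤ)⟧' = 0 := comp_distTriang_mor_zero₃₁ _ hT
  refine ⟨E', k, d', j, hE', hpj, fun {Z} x y hxy => ?_⟩
  obtain ⟨z, hz, -⟩ : ∃ z : E' ⟶ Z, k ≫ z = y ≫ 𝟙 Z ∧ d' ≫ (0 : D ⟶ 0) = z ≫ 0 :=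
    complete_distinguished_triangle_morphism₂ _ _ hE' (contractible_distinguished Z) y 0 (by
      change (q ≫ β⟦(1 : ℤ)⟧') ≫ y⟦(1 : ℤ)⟧' = 0 ≫ 0
      rw [Category.assoc, ← Functor.map_comp, ← hxy, Functor.map_comp, reassoc_of% hqp, zero_comp,
        zero_comp])
  obtain ⟨w, hw⟩ : ∃ w, j ≫ z - x = d ≫ w :=
    Triangle.yoneda_exact₂ _ hT _
      (show p ≫ (j ≫ z - x) = 0 by simp [reassoc_of% hpj, hz, hxy])
  exact ⟨z - d' ≫ w, by simp [← reassoc_of% hjd, ← hw], by simp [reassoc_of% hkd, hz]⟩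

/-- `E` is an extension of `M` by `A`: there is a distinguished triangle `A ⟶ E ⟶ M ⟶ A⟦1⟧`.
The maps are existentially quantified, as in the steps of the towers defining `complexity`. -/
def IsExt (A E M : C) : Prop :=
  ∃ (i : A ⟶ E) (e : E ⟶ M) (m : M ⟶ A⟦(1 : ℤ)⟧), Triangle.mk i e m ∈ distTriang C

lemma isExt_of_distTriang {T : Triangle C} (hT : T ∈ distTriang C) :
    IsExt T.obj₁ T.obj₂ T.obj₃ :=
  ⟨T.mor₁, T.mor₂, T.mor₃, hT⟩

namespace IsExt

variable {A E M : C}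

lemma of_iso_right {M' : C} (h : IsExt A E M) (φ : M ≅ M') : IsExt A E M' := by
  obtain ⟨i, e, m, hT⟩ := h
  refine ⟨i, e ≫ φ.hom, φ.inv ≫ m, isomorphic_distinguished _ hT _
    (Triangle.isoMk _ _ (Iso.refl A) (Iso.refl E) φ.symm ?_ ?_ ?_)⟩
  · change i ≫ 𝟙 E = 𝟙 A ≫ i
    simp
  · change (e ≫ φ.hom) ≫ φ.inv = 𝟙 E ≫ e
    simp
  · change (φ.inv ≫ m) ≫ (𝟙 A)⟦(1 : ℤ)⟧' = φ.inv ≫ m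
    simp

lemma shift (h : IsExt A E M) (n : ℤ) : IsExt (A⟦n⟧) (E⟦n⟧) (M⟦n⟧) := by
  obtain ⟨i, e, m, hT⟩ := h
  exact isExt_of_distTriang (Triangle.shift_distinguished _ hT n)

lemma map {D : Type u₂} [Category.{v₂} D] [Preadditive D] [HasZeroObject D] [HasShift D ℤ]
    [∀ n : ℤ, (shiftFunctor D n).Additive] [Pretriangulated D] (h : IsExt A E M) (H : C ⥤ D)
    [H.CommShift ℤ] [H.IsTriangulated] : IsExt (H.obj A) (H.obj E) (H.obj M) := by
  obtain ⟨i, e, m, hT⟩ := h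
  exact isExt_of_distTriang (H.map_distinguished _ hT)

lemma exists_retract_of_retract_left {A' : C} (h : IsExt A E M) (ρ : Retract A A') :
    ∃ E', IsExt A' E' M ∧ Nonempty (Retract E E') := by
  obtain ⟨i, e, m, hT⟩ := h
  obtain ⟨E', k, d, j, hE', -, desc⟩ := exists_weakPushout_of_distTriang hT ρ.i
  obtain ⟨r, hr, -⟩ := desc (𝟙 E) (ρ.r ≫ i) (by simp)
  exact ⟨E', ⟨k, d, _, hE'⟩, ⟨⟨j, r, hr⟩⟩⟩

lemma exists_retract_of_retract_right {M' : C} (h : IsExt A E M) (ρ : Retract M M') :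
    ∃ E', IsExt A E' M' ∧ Nonempty (Retract E E') := by
  obtain ⟨i, e, m, hT⟩ := h
  obtain ⟨E', j, b, r, hE', -, lift⟩ := exists_weakPullback_of_distTriang hT ρ.r
  obtain ⟨k, hk, -⟩ := lift (𝟙 E) (e ≫ ρ.i) (by simp)
  exact ⟨E', ⟨j, b, _, hE'⟩, ⟨⟨k, r, hk⟩⟩⟩

lemma exists_retract_assoc {B D : C} (h : IsExt A E M) (h' : IsExt B M D) :
    ∃ Q E', IsExt A Q B ∧ IsExt Q E' D ∧ Nonempty (Retract E E') := by
  obtain ⟨i, e, m, hE⟩ := h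
  obtain ⟨g, d, n, hM⟩ := h'
  obtain ⟨Q, j, b, γ, hQ, -, lift⟩ := exists_weakPullback_of_distTriang hE g
  obtain ⟨P, p, q, hP⟩ := distinguished_cocone_triangle₁ (e ≫ d)
  have hpe : p ≫ e ≫ d = 0 := comp_distTriang_mor_zero₁₂ _ hP
  obtain ⟨u, hu⟩ : ∃ u, p ≫ e = u ≫ g :=
    Triangle.coyoneda_exact₂ _ hM (p ≫ e) ((Category.assoc _ _ _).trans hpe)
  obtain ⟨β, hβ, -⟩ := lift p u hu
  obtain ⟨E', k, d', s, hE', -, desc⟩ := exists_weakPushout_of_distTriang hP β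
  obtain ⟨r, hr, -⟩ := desc (𝟙 E) γ (by rw [Category.comp_id, hβ])
  exact ⟨Q, E', ⟨j, b, _, hQ⟩, ⟨k, d', _, hE'⟩, ⟨⟨s, r, hr⟩⟩⟩

end IsExt

lemma nonempty_retract_iff_exists_iso_biprod {X Y : C} :
    Nonempty (Retract X Y) ↔ ∃ Z, Nonempty (Y ≅ X ⊞ Z) := by
  constructor
  · rintro ⟨ρ⟩
    obtain ⟨Z, g, h, hT⟩ := distinguished_cocone_triangle ρ.i
    have h_zero : h = 0 := Triangle.mor₃_eq_zero_of_mono₁ _ hT (inferInstanceAs (Mono ρ.i))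
    obtain ⟨φ, -⟩ := exists_iso_binaryBiproduct_of_distTriang _ hT h_zero
    exact ⟨Z, ⟨φ⟩⟩
  · rintro ⟨Z, ⟨φ⟩⟩
    exact ⟨⟨biprod.inl ≫ φ.inv, φ.hom ≫ biprod.fst, by simp⟩⟩

namespace IsThick

variable {S : Set C}

lemma mem_of_retract (hS : IsThick C S) {X Y : C} (ρ : Retract X Y) (hY : Y ∈ S) : X ∈ S := by
  obtain ⟨Z, ⟨φ⟩⟩ := nonempty_retract_iff_exists_iso_biprod.1 ⟨ρ⟩
  exact hS.summand_mem X Z (hS.mem_of_iso φ hY)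

lemma mem_of_isZero (hS : IsThick C S) {X Y : C} (hX : X ∈ S) (hY : IsZero Y) : Y ∈ S :=
  hS.mem_of_iso ((isZero_zero C).iso hY)
    (hS.cone_mem _ (contractible_distinguished X) hX hX)

lemma mem_of_isExt (hS : IsThick C S) {A E M : C} (h : IsExt A E M) (hA : A ∈ S) (hM : M ∈ S) :
    E ∈ S := by
  obtain ⟨i, e, m, hT⟩ := h
  exact hS.cone_mem _ (inv_rot_of_distTriang _ hT) (hS.shift_mem M (-1) hM) hA

end IsThick

/-! ### Costs -/

/-- `HasCost t M c N`: the object `N` is a retract of an iterated extension of shifts `M⟦n⟧` with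
`∑ exp (n t) = c`. Retracts are allowed at every stage, since extensions are associative only up to
retracts. -/
inductive HasCost (t : ℝ) (M : C) : ℝ≥0∞ → C → Prop
  | zero {N : C} (hN : IsZero N) : HasCost t M 0 N
  | step {A N : C} {c : ℝ≥0∞} {n : ℤ} (hA : HasCost t M c A) (h : IsExt A N (M⟦n⟧)) :
      HasCost t M (c + ENNReal.ofReal (Real.exp (n * t))) N
  | retract {N N' : C} {c : ℝ≥0∞} (hN' : HasCost t M c N') (ρ : Retract N N') : HasCost t M c N

namespace HasCost

variable {t : ℝ} {M N : C} {c : ℝ≥0∞}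

lemma ne_top (h : HasCost t M c N) : c ≠ ⊤ := by
  induction h with
  | zero => exact ENNReal.zero_ne_top
  | step _ _ ih => exact ENNReal.add_ne_top.2 ⟨ih, ENNReal.ofReal_ne_top⟩
  | retract _ _ ih => exact ih

protected lemma self (t : ℝ) (M : C) : HasCost t M 1 M := by
  have h : IsExt 0 M (M⟦(0 : ℤ)⟧) :=
    (isExt_of_distTriang (contractible_distinguished₁ M)).of_iso_right
      ((shiftFunctorZero C ℤ).app M).symm
  simpa using step (t := t) (zero (isZero_zero C)) h

lemma shift (h : HasCost t M c N) (k : ℤ) :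
    HasCost t M (c * ENNReal.ofReal (Real.exp (k * t))) (N⟦k⟧) := by
  induction h with
  | zero hN => simpa using zero ((shiftFunctor C k).map_isZero hN)
  | @step _ _ _ n _ h ih =>
    have h_exp : ENNReal.ofReal (Real.exp ((n + k : ℤ) * t)) =
        ENNReal.ofReal (Real.exp (n * t)) * ENNReal.ofReal (Real.exp (k * t)) := by
      rw [← ENNReal.ofReal_mul (Real.exp_nonneg _), ← Real.exp_add, Int.cast_add, add_mul]
    rw [add_mul, ← h_exp]
    exact step ih ((h.shift k).of_iso_right ((shiftFunctorAdd C n k).app M).symm)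
  | retract _ ρ ih => exact retract ih (ρ.map _)

lemma map {D : Type u₂} [Category.{v₂} D] [Preadditive D] [HasZeroObject D] [HasShift D ℤ]
    [∀ n : ℤ, (shiftFunctor D n).Additive] [Pretriangulated D] (h : HasCost t M c N) (H : C ⥤ D)
    [H.CommShift ℤ] [H.IsTriangulated] : HasCost t (H.obj M) c (H.obj N) := by
  induction h with
  | zero hN => exact zero (H.map_isZero hN)
  | @step _ _ _ n _ h ih => exact step ih ((h.map H).of_iso_right ((H.commShiftIso n).app M))
  | retract _ ρ ih => exact retract ih (ρ.map H)

lemma ext {A E U : C} {a : ℝ≥0∞} (hA : HasCost t M a A) (hU : HasCost t M c U)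
    (h : IsExt A E U) : HasCost t M (a + c) E := by
  induction hU generalizing E with
  | zero hU =>
    obtain ⟨i, _, _, hT⟩ := h
    have : IsIso i := (Triangle.isZero₃_iff_isIso₁ _ hT).1 hU
    rw [add_zero]
    exact retract hA (.ofIso (asIso i).symm)
  | step _ hU ih =>
    obtain ⟨Q, E', hQ, hE', ⟨ρ⟩⟩ := h.exists_retract_assoc hU
    rw [← add_assoc]
    exact retract (step (ih hQ) hE') ρ
  | retract _ ρU ih =>
    obtain ⟨E', hE', ⟨ρ⟩⟩ := h.exists_retract_of_retract_right ρU
    exact retract (ih hE') ρ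

lemma trans {L : C} {a : ℝ≥0∞} (hN : HasCost t M a N) (hL : HasCost t N c L) :
    HasCost t M (a * c) L := by
  induction hL with
  | zero h => simpa using zero h
  | @step _ _ _ n _ h ih =>
    rw [mul_add]
    exact ih.ext (hN.shift n) h
  | retract _ ρ ih => exact retract ih ρ

end HasCost

lemma isThick_setOf_exists_hasCost (t : ℝ) (M : C) : IsThick C {N | ∃ c, HasCost t M c N} where
  mem_of_iso := fun φ ⟨_, h⟩ => ⟨_, h.retract (.ofIso φ.symm)⟩
  shift_mem := fun _ n ⟨_, h⟩ => ⟨_, h.shift n⟩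
  cone_mem := fun _ hT ⟨_, h₁⟩ ⟨_, h₂⟩ =>
    ⟨_, h₂.ext (h₁.shift 1) (isExt_of_distTriang (rot_of_distTriang _ hT))⟩
  summand_mem := fun _ _ ⟨_, h⟩ => ⟨_, h.retract ⟨biprod.inl, biprod.fst, biprod.inl_fst⟩⟩

lemma mem_thickClosure_iff_exists_hasCost (t : ℝ) {M N : C} :
    N ∈ thickClosure C M ↔ ∃ c, HasCost t M c N := by
  constructor
  · exact fun hN => hN _ ⟨isThick_setOf_exists_hasCost t M, _, .self t M⟩
  · rintro ⟨c, h⟩ S ⟨hS, hM⟩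
    induction h with
    | zero hN => exact hS.mem_of_isZero hM hN
    | step _ h ih => exact hS.mem_of_isExt h ih (hS.shift_mem M _ hM)
    | retract _ ρ ih => exact hS.mem_of_retract ρ ih

/-! ### Towers -/

/-- The towers in the definition of `complexity`: the `i`-th step from `A i` to `A (i + 1)` is an
extension by `M⟦n i⟧`. -/
structure IsTower (M : C) {p : ℕ} (n : Fin p → ℤ) (A : Fin (p + 1) → C) : Prop where
  isZero : IsZero (A 0)
  isExt (i : Fin p) : IsExt (A i.castSucc) (A i.succ) (M⟦n i⟧)

namespace IsTower

variable {M : C} {p : ℕ} {n : Fin p → ℤ} {A : Fin (p + 1) → C}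

lemma hasCost_last (h : IsTower M n A) (t : ℝ) :
    HasCost t M (∑ i, ENNReal.ofReal (Real.exp (n i * t))) (A (Fin.last p)) := by
  induction p with
  | zero => simpa using HasCost.zero h.isZero
  | succ p ih =>
    have h_init : IsTower M (fun i => n i.castSucc) (fun i => A i.castSucc) :=
      ⟨h.isZero, fun i => h.isExt i.castSucc⟩
    rw [Fin.sum_univ_castSucc]
    exact .step (ih h_init) (h.isExt (Fin.last p))

lemma snoc (h : IsTower M n A) {B : C} {k : ℤ} (hB : IsExt (A (Fin.last p)) B (M⟦k⟧)) :
    IsTower M (Fin.snoc (α := fun _ => ℤ) n k) (Fin.snoc (α := fun _ => C) A B) where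
  isZero := by simpa only [← Fin.castSucc_zero, Fin.snoc_castSucc] using h.isZero
  isExt i := by
    induction i using Fin.lastCases with
    | last => simpa only [Fin.succ_last, Fin.snoc_castSucc, Fin.snoc_last] using hB
    | cast i => simpa only [Fin.succ_castSucc, Fin.snoc_castSucc] using h.isExt i

end IsTower

lemma HasCost.exists_isTower {t : ℝ} {M N : C} {c : ℝ≥0∞} (h : HasCost t M c N) :
    ∃ (p : ℕ) (n : Fin p → ℤ) (A : Fin (p + 1) → C), IsTower M n A ∧
      Nonempty (Retract N (A (Fin.last p))) ∧ c = ∑ i, ENNReal.ofReal (Real.exp (n i * t)) := by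
  induction h with
  | @zero N hN =>
    exact ⟨0, Fin.elim0, fun _ => N, ⟨hN, fun i => i.elim0⟩, ⟨.refl N⟩, by simp⟩
  | @step _ _ _ k _ h ih =>
    obtain ⟨p, n, A, hA, ⟨ρ⟩, rfl⟩ := ih
    obtain ⟨B, hB, ⟨ρ'⟩⟩ := h.exists_retract_of_retract_left ρ
    refine ⟨p + 1, Fin.snoc (α := fun _ => ℤ) n k, _, hA.snoc hB, ⟨?_⟩, ?_⟩
    · rwa [Fin.snoc_last]
    · simp only [Fin.sum_univ_castSucc, Fin.snoc_castSucc, Fin.snoc_last]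
  | retract _ ρ ih =>
    obtain ⟨p, n, A, hA, ⟨ρ'⟩, hc⟩ := ih
    exact ⟨p, n, A, hA, ⟨ρ.trans ρ'⟩, hc⟩

/-! ### Complexity -/

lemma complexity_eq_sInf_hasCost (t : ℝ) (M N : C) :
    complexity C t M N = sInf {c | HasCost t M c N} := by
  unfold complexity
  split_ifs with hN hmem
  · have h_zero : HasCost t M 0 N := .zero hN
    exact (nonpos_iff_eq_zero.1 (sInf_le h_zero)).symm
  · congr 1 with c
    constructor
    · rintro ⟨p, -, n, A, N', h₀, hN', hA, rfl⟩
      obtain ⟨ρ⟩ := nonempty_retract_iff_exists_iso_biprod.2 ⟨N', hN'⟩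
      exact (IsTower.hasCost_last ⟨h₀, hA⟩ t).retract ρ
    · intro h
      obtain ⟨p, n, A, hA, ⟨ρ⟩, hc⟩ := h.exists_isTower
      obtain ⟨N', hN'⟩ := nonempty_retract_iff_exists_iso_biprod.1 ⟨ρ⟩
      have hp : 0 < p := by
        rw [pos_iff_ne_zero]
        rintro rfl
        exact hN (hA.isZero.of_mono ρ.i)
      exact ⟨p, hp, n, A, N', hA.isZero, hN', hA.isExt, hc⟩
  · have h_empty : {c | HasCost t M c N} = ∅ :=
      Set.eq_empty_of_forall_notMem fun c h =>
        hmem ((mem_thickClosure_iff_exists_hasCost t).2 ⟨c, h⟩)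
    rw [h_empty, sInf_empty]

lemma complexity_le_of_hasCost {t : ℝ} {M N : C} {c : ℝ≥0∞} (h : HasCost t M c N) :
    complexity C t M N ≤ c := by
  rw [complexity_eq_sInf_hasCost]
  exact sInf_le h

lemma complexity_ne_top {M N : C} (h : N ∈ thickClosure C M) (t : ℝ) :
    complexity C t M N ≠ ⊤ := by
  obtain ⟨c, hc⟩ := (mem_thickClosure_iff_exists_hasCost t).1 h
  exact ne_top_of_le_ne_top hc.ne_top (complexity_le_of_hasCost hc)

lemma complexity_self_le_one (t : ℝ) (M : C) : complexity C t M M ≤ 1 :=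
  complexity_le_of_hasCost (.self t M)

lemma complexity_le_of_retract (t : ℝ) (M : C) {N N' : C} (ρ : Retract N N') :
    complexity C t M N ≤ complexity C t M N' := by
  simp only [complexity_eq_sInf_hasCost]
  exact sInf_le_sInf fun _ h => h.retract ρ

lemma complexity_le_mul (t : ℝ) {M N L : C}
    (h : complexity C t M N ≠ 0 ∨ complexity C t N L ≠ ⊤)
    (h' : complexity C t M N ≠ ⊤ ∨ complexity C t N L ≠ 0) :
    complexity C t M L ≤ complexity C t M N * complexity C t N L := by
  refine ENNReal.le_mul_of_forall_lt h h' fun a ha c hc => ?_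
  rw [complexity_eq_sInf_hasCost] at ha hc
  obtain ⟨a', hN, ha'⟩ := sInf_lt_iff.1 ha
  obtain ⟨c', hL, hc'⟩ := sInf_lt_iff.1 hc
  exact (complexity_le_of_hasCost (hN.trans hL)).trans (mul_le_mul' ha'.le hc'.le)

lemma complexity_map_le {D : Type u₂} [Category.{v₂} D] [Preadditive D] [HasZeroObject D]
    [HasShift D ℤ] [∀ n : ℤ, (shiftFunctor D n).Additive] [Pretriangulated D] (t : ℝ) (H : C ⥤ D)
    [H.CommShift ℤ] [H.IsTriangulated] (M N : C) :
    complexity D t (H.obj M) (H.obj N) ≤ complexity C t M N := by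
  simp only [complexity_eq_sInf_hasCost]
  exact sInf_le_sInf fun _ h => h.map H

lemma complexity_iter_map_le (t : ℝ) (F : C ⥤ C) [F.CommShift ℤ] [F.IsTriangulated] (m : ℕ)
    (M N : C) :
    complexity C t ((iter C F m).obj M) ((iter C F m).obj N) ≤ complexity C t M N := by
  induction m with
  | zero => exact le_rfl
  | succ m ih => exact (complexity_map_le t F _ _).trans ih

namespace IsSplitGenerator

variable {G : C}

lemma complexity_iter_le_mul (hG : IsSplitGenerator C G) (t : ℝ) (F : C ⥤ C) [F.CommShift ℤ]
    [F.IsTriangulated] (m : ℕ) (N : C) :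
    complexity C t G ((iter C F m).obj N) ≤
      complexity C t G ((iter C F m).obj G) * complexity C t G N := by
  have h_map := complexity_iter_map_le t F m G N
  have h_top := ne_top_of_le_ne_top (complexity_ne_top (hG N) t) h_map
  exact (complexity_le_mul t (.inr h_top) (.inl (complexity_ne_top (hG _) t))).trans
    (mul_le_mul_right h_map _)

lemma complexity_iter_le_pow (hG : IsSplitGenerator C G) (t : ℝ) (F : C ⥤ C) [F.CommShift ℤ]
    [F.IsTriangulated] (m : ℕ) :
    complexity C t G ((iter C F m).obj G) ≤ complexity C t G (F.obj G) ^ m := by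
  induction m with
  | zero => exact (complexity_self_le_one t G).trans_eq (pow_zero _).symm
  | succ m ih =>
    rw [pow_succ']
    exact (hG.complexity_iter_le_mul t F 1 _).trans (mul_le_mul_right ih _)

lemma entropy_le_log_complexity (hG : IsSplitGenerator C G) (t : ℝ) (F : C ⥤ C) [F.CommShift ℤ]
    [F.IsTriangulated] : entropy C F G t ≤ (complexity C t G (F.obj G)).log := by
  refine limsup_le_of_le (by isBoundedDefault) ?_
  filter_upwards [eventually_ne_atTop 0] with m hm
  have h_nonneg : (0 : EReal) ≤ ((m : ℝ)⁻¹ : ℝ) := by positivity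
  have h_cancel : (((m : ℝ)⁻¹ : ℝ) : EReal) * m = 1 := by
    rw [← EReal.coe_coe_eq_natCast, ← EReal.coe_mul, inv_mul_cancel₀ (Nat.cast_ne_zero.2 hm),
      EReal.coe_one]
  calc (((m : ℝ)⁻¹ : ℝ) : EReal) * (complexity C t G ((iter C F m).obj G)).log
    _ ≤ ((m : ℝ)⁻¹ : ℝ) * (complexity C t G (F.obj G) ^ m).log :=
        mul_le_mul_of_nonneg_left (ENNReal.log_monotone (hG.complexity_iter_le_pow t F m)) h_nonneg
    _ = (complexity C t G (F.obj G)).log := by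
        rw [ENNReal.log_pow, ← mul_assoc, h_cancel, one_mul]

lemma entropy_ne_top (hG : IsSplitGenerator C G) (t : ℝ) (F : C ⥤ C) [F.CommShift ℤ]
    [F.IsTriangulated] : entropy C F G t ≠ ⊤ :=
  ne_top_of_le_ne_top (by simpa only [Ne, ENNReal.log_eq_top_iff] using complexity_ne_top (hG _) t)
    (hG.entropy_le_log_complexity t F)

end IsSplitGenerator

end Pretriangulated

/-! ### Iterates of commuting functors -/

section Iterates

variable {C : Type u} [Category.{v} C]

lemma nonempty_iter_comp_iso_comp_iter {F H : C ⥤ C} (φ : F ⋙ H ≅ H ⋙ F) (m : ℕ) :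
    Nonempty (iter C F m ⋙ H ≅ H ⋙ iter C F m) := by
  induction m with
  | zero => exact ⟨H.leftUnitor ≪≫ H.rightUnitor.symm⟩
  | succ m ih =>
    obtain ⟨ψ⟩ := ih
    exact ⟨Functor.isoWhiskerLeft (iter C F m) φ ≪≫ Functor.isoWhiskerRight ψ F⟩

lemma nonempty_iter_comp_iso {F H : C ⥤ C} (φ : F ⋙ H ≅ H ⋙ F) (m : ℕ) :
    Nonempty (iter C (F ⋙ H) m ≅ iter C F m ⋙ iter C H m) := by
  induction m with
  | zero => exact ⟨(𝟭 C).leftUnitor.symm⟩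
  | succ m ih =>
    obtain ⟨χ⟩ := ih
    obtain ⟨ψ⟩ := nonempty_iter_comp_iso_comp_iter φ.symm m
    exact ⟨Functor.isoWhiskerRight χ (F ⋙ H) ≪≫
      Functor.isoWhiskerRight (Functor.isoWhiskerLeft (iter C F m) ψ) H⟩

end Iterates

theorem statement_11_general {C : Type u} [Category.{v} C] [Preadditive C] [HasZeroObject C]
    [HasShift C ℤ] [∀ n : ℤ, (shiftFunctor C n).Additive] [Pretriangulated C]
    {G : C} (hG : IsSplitGenerator C G)
    (F₁ : C ⥤ C) [F₁.CommShift ℤ] [F₁.IsTriangulated]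
    (F₂ : C ⥤ C) [F₂.CommShift ℤ] [F₂.IsTriangulated]
    (hcomm : Nonempty (F₂ ⋙ F₁ ≅ F₁ ⋙ F₂)) (t : ℝ) :
    entropy C (F₂ ⋙ F₁) G t ≤ entropy C F₁ G t + entropy C F₂ G t := by
  obtain ⟨φ⟩ := hcomm
  refine le_trans (limsup_le_limsup (Eventually.of_forall fun m => ?_)) (EReal.limsup_add_le
    (.inr (hG.entropy_ne_top t F₂)) (.inl (hG.entropy_ne_top t F₁)))
  obtain ⟨ψ⟩ := nonempty_iter_comp_iso φ m
  have h_mul : complexity C t G ((iter C (F₂ ⋙ F₁) m).obj G) ≤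
      complexity C t G ((iter C F₁ m).obj G) * complexity C t G ((iter C F₂ m).obj G) :=
    (complexity_le_of_retract t G (.ofIso (ψ.app G))).trans (hG.complexity_iter_le_mul t F₁ m _)
  have h_nonneg : (0 : EReal) ≤ ((m : ℝ)⁻¹ : ℝ) := by positivity
  rw [Pi.add_apply, ← EReal.left_distrib_of_nonneg_of_ne_top h_nonneg (EReal.coe_ne_top _),
    ← ENNReal.log_mul_add]
  exact mul_le_mul_of_nonneg_left (ENNReal.log_monotone h_mul) h_nonneg

/-- If `F₁ F₂ ≅ F₂ F₁` then `h_t(F₁ F₂) ≤ h_t(F₁) + h_t(F₂)` (here `F₁ F₂ = F₂ ⋙ F₁`). -/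
theorem statement_11 {C : Type u} [Category.{v} C] [Preadditive C] [HasZeroObject C]
    [HasShift C ℤ] [∀ n : ℤ, (shiftFunctor C n).Additive] [Pretriangulated C] [Linear ℂ C]
    (hC : ∃ X : C, ¬ IsZero X) (hft : IsFiniteType C)
    (G : C) (hG : IsSplitGenerator C G)
    (F₁ : C ⥤ C) [F₁.Additive] [F₁.Linear ℂ] [F₁.CommShift ℤ] [F₁.IsTriangulated]
    (F₂ : C ⥤ C) [F₂.Additive] [F₂.Linear ℂ] [F₂.CommShift ℤ] [F₂.IsTriangulated]
    (h₁ : ∀ n : ℕ, ¬ IsZero ((iter C F₁ n).obj G))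
    (h₂ : ∀ n : ℕ, ¬ IsZero ((iter C F₂ n).obj G))
    (h₁₂ : ∀ n : ℕ, ¬ IsZero ((iter C (F₂ ⋙ F₁) n).obj G))
    (hcomm : Nonempty ((F₂ ⋙ F₁) ≅ (F₁ ⋙ F₂))) (t : ℝ) :
    entropy C (F₂ ⋙ F₁) G t ≤ entropy C F₁ G t + entropy C F₂ G t :=
  statement_11_general hG F₁ F₂ hcomm t

end CatEntropy
end
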